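/- arXiv:0812.4897 — 2 statements merged into one kernel-verified Lean document; each statement's English description precedes it below -/
import Mathlib

section
/- For every k ≥ 1 and every γ̃ ∈ Γ̃^k(A,M): (a) ψ^k(γ̃) lies in C̄^k(A,M); (b) the kernel of ψ^k is exactly ∂Γ̃^k(A,M), so ψ^k induces an injective 𝔽-linear map ψ^k: Γ^k(A,M) = Γ̃^k/∂Γ̃^k ↪ C̄^k(A,M) ⊆ C^k(A,M). -/
namespace LCC

/-! ### Index utilities -/

/-- Skip one index: the increasing enumeration of `{0,…,k} \ {i}`. -/
def skip1 (i r : ℕ) : ℕ := if r < i then r else r + 1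

/-- Skip two indices `i < j`: the increasing enumeration of `{0,…,k+1} \ {i,j}`. -/
def skip2 (i j r : ℕ) : ℕ := if r < i then r else if r + 1 < j then r + 1 else r + 2

/-- Remove the `i`-th entry of a tuple. -/
def rm1 {α : Type*} {k : ℕ} (i : ℕ) (a : Fin (k+1) → α) : Fin k → α :=
  fun r => a ⟨skip1 i r.1, by have := r.2; unfold skip1; split <;> omega⟩

/-- Remove the `i`-th and `j`-th entries (for `i < j`) of a tuple. -/
def rm2 {α : Type*} {k : ℕ} (i j : ℕ) (a : Fin (k+2) → α) : Fin k → α :=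
  fun r => a ⟨skip2 i j r.1, by
    have := r.2; unfold skip2; split
    · omega
    · split <;> omega⟩

/-- Total weight of a multi-index. -/
def wt {k : ℕ} (ν : Fin k → ℕ) : ℕ := ∑ r, ν r

/-- The multinomial coefficient `(|m| + s)! / (∏ mᵣ! · s!)`. -/
def mnom {K : ℕ} (m : Fin K → ℕ) (s : ℕ) : ℕ :=
  (wt m + s).factorial / ((∏ r, (m r).factorial) * s.factorial)

variable (F : Type*) [Field F]

/-- A Lie conformal algebra over `F`: an `F[∂]`-module `A` (given by the linear
endomorphism `D`), together with a `λ`-bracket recorded through its coefficients: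
`[a_λ b] = ∑ₙ (br a b n) λⁿ`, satisfying sesquilinearity, skew-symmetry and the
Jacobi identity (all written in terms of coefficients of the `λ`-expansions). -/
structure LCA (A : Type*) [AddCommGroup A] [Module F A] where
  D : A →ₗ[F] A
  br : A →ₗ[F] A →ₗ[F] (ℕ → A)
  br_fin : ∀ a b, (Function.support (br a b)).Finite
  sesq_left_zero : ∀ a b, br (D a) b 0 = 0
  sesq_left : ∀ a b n, br (D a) b (n+1) = - br a b n
  sesq_right : ∀ a b n, br a (D b) n
      = D (br a b n) + (if n = 0 then 0 else br a b (n-1))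
  skew : ∀ a b m, br a b m
      = - ∑ᶠ n, ((-1 : F)^n * (n.choose m : F)) • ((D ^ (n - m)) (br b a n))
  jacobi : ∀ a b c m n,
      br a (br b c n) m - br b (br a c m) n
        = ∑ j ∈ Finset.range (m+1), (((n+j).choose j : F)) • br (br a b (m-j)) c (n+j)

/-- A module over a Lie conformal algebra: an `F[∂]`-module `M` with a `λ`-action
of `A`, given through the coefficients `a_λ v = ∑ₙ (act a v n) λⁿ`, satisfying
sesquilinearity and the Jacobi identity. -/
structure LCAMod {A : Type*} [AddCommGroup A] [Module F A] (L : LCA F A)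
    (M : Type*) [AddCommGroup M] [Module F M] where
  D : M →ₗ[F] M
  act : A →ₗ[F] M →ₗ[F] (ℕ → M)
  act_fin : ∀ a m, (Function.support (act a m)).Finite
  sesq_left_zero : ∀ a m, act (L.D a) m 0 = 0
  sesq_left : ∀ a m n, act (L.D a) m (n+1) = - act a m n
  sesq_right : ∀ a m n, act a (D m) n
      = D (act a m n) + (if n = 0 then 0 else act a m (n-1))
  jacobi : ∀ a b v p q,
      act a (act b v q) p - act b (act a v p) q
        = ∑ j ∈ Finset.range (p+1), (((q+j).choose j : F)) • act (L.br a b (p-j)) v (q+j)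

variable {F}
variable {A M : Type*} [AddCommGroup A] [Module F A] [AddCommGroup M] [Module F M]

/-- Torsion elements of the `F[∂]`-module `A`. -/
def IsTor (L : LCA F A) (x : A) : Prop :=
  ∃ p : Polynomial F, p ≠ 0 ∧ Polynomial.aeval L.D p x = 0

/-- `A` decomposes, as an `F[∂]`-module, into the direct sum of its torsion and
a free complementary submodule `F[∂] ⊗ U`. -/
def Decomposes (L : LCA F A) : Prop :=
  ∃ U : Submodule F A, Function.Bijective
    (fun p : {x : A // IsTor L x} × (ℕ →₀ U) =>
      (p.1 : A) + p.2.sum (fun n u => (L.D ^ n) (u : A)))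

variable {L : LCA F A}

/-- The condition for a coefficient family
`γ : A^{⊗ k} → F[λ₁,…,λ_k] ⊗ M` (recorded via the coefficients
`γ a ν` of `λ^ν`) to be a basic `k`-cochain: `F`-multilinearity, polynomiality,
sesquilinearity (A1) and skew-symmetry (A2). -/
structure IsGamma (R : LCAMod F L M) (k : ℕ)
    (γ : (Fin k → A) → (Fin k → ℕ) → M) : Prop where
  map_add : ∀ (a : Fin k → A) (i : Fin k) (x y : A),
    γ (Function.update a i (x + y)) = γ (Function.update a i x) + γ (Function.update a i y)
  map_smul : ∀ (a : Fin k → A) (i : Fin k) (r : F) (x : A),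
    γ (Function.update a i (r • x)) = r • γ (Function.update a i x)
  fin : ∀ a, (Function.support (γ a)).Finite
  sesq : ∀ (a : Fin k → A) (i : Fin k) (x : A) (ν : Fin k → ℕ),
    γ (Function.update a i (L.D x)) ν
      = (if ν i = 0 then 0 else - γ (Function.update a i x) (Function.update ν i (ν i - 1)))
  skew : ∀ (a : Fin k → A) (ν : Fin k → ℕ) (σ : Equiv.Perm (Fin k)),
    γ (a ∘ σ) (ν ∘ σ) = ((Equiv.Perm.sign σ : ℤˣ) : ℤ) • γ a ν

/-- The action of `∂` on basic cochains: `(∂γ) = (∂^M + λ₁ + ⋯ + λ_k) ∘ γ`,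
in terms of coefficients. -/
def GammaD (R : LCAMod F L M) {k : ℕ} (γ : (Fin k → A) → (Fin k → ℕ) → M) :
    (Fin k → A) → (Fin k → ℕ) → M :=
  fun a ν => R.D (γ a ν)
    + ∑ i : Fin k, (if ν i = 0 then 0 else γ a (Function.update ν i (ν i - 1)))

/-- Substitution of the auxiliary variable `μ` by
`λ† = −λ₁ − ⋯ − λ_K − ∂^M` (with `∂^M` moved to the left) in a polynomial
`q` in `λ₁,…,λ_K, μ`, recorded through its coefficients `q ρ n` of `λ^ρ μ^n`.
The result is the coefficient of `λ^ν`. -/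
noncomputable def substDag {K : ℕ} (DM : M →ₗ[F] M)
    (q : (Fin K → ℕ) → ℕ → M) (ν : Fin K → ℕ) : M :=
  ∑ ρ ∈ Finset.Iic ν, ∑ᶠ s : ℕ,
    (((-1 : F)^(wt (fun r => ν r - ρ r) + s)) * (mnom (fun r => ν r - ρ r) s : F)) •
      ((DM ^ s) (q ρ (wt (fun r => ν r - ρ r) + s)))

/-- The condition for a coefficient family
`c : A^{⊗(k+1)} → F[λ₁,…,λ_k] ⊗ M` to be a `(k+1)`-`λ`-bracket
(an element of `C^{k+1}(A,M)`), i.e. conditions B1, B2, B3 of the paper,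
written in terms of the coefficients `c a ν` of `λ^ν`. -/
structure IsCBr (R : LCAMod F L M) (k : ℕ)
    (c : (Fin (k+1) → A) → (Fin k → ℕ) → M) : Prop where
  map_add : ∀ (a : Fin (k+1) → A) (i : Fin (k+1)) (x y : A),
    c (Function.update a i (x + y)) = c (Function.update a i x) + c (Function.update a i y)
  map_smul : ∀ (a : Fin (k+1) → A) (i : Fin (k+1)) (r : F) (x : A),
    c (Function.update a i (r • x)) = r • c (Function.update a i x)
  fin : ∀ a, (Function.support (c a)).Finite
  sesq₁ : ∀ (a : Fin (k+1) → A) (i : Fin k) (x : A) (ν : Fin k → ℕ),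
    c (Function.update a i.castSucc (L.D x)) ν
      = (if ν i = 0 then 0
         else - c (Function.update a i.castSucc x) (Function.update ν i (ν i - 1)))
  sesq₂ : ∀ (a : Fin (k+1) → A) (x : A) (ν : Fin k → ℕ),
    c (Function.update a (Fin.last k) (L.D x)) ν
      = R.D (c (Function.update a (Fin.last k) x) ν)
        + ∑ i : Fin k, (if ν i = 0 then 0
            else c (Function.update a (Fin.last k) x) (Function.update ν i (ν i - 1)))
  skew : ∀ (a : Fin (k+1) → A) (ν : Fin k → ℕ) (σ : Equiv.Perm (Fin (k+1))),
    c a ν = ((Equiv.Perm.sign σ : ℤˣ) : ℤ) • substDag R.D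
      (fun ρ n =>
        if (Fin.snoc ρ n : Fin (k+1) → ℕ) (σ (Fin.last k)) = 0 then
          c (a ∘ σ) (fun i : Fin k => (Fin.snoc ρ n : Fin (k+1) → ℕ) (σ i.castSucc))
        else 0) ν

/-- The subspace `C̄`: poly-`λ`-brackets vanishing whenever one of the arguments is
a torsion element of `A`. -/
def VanishOnTorsion (L : LCA F A) {k : ℕ}
    (c : (Fin (k+1) → A) → (Fin k → ℕ) → M) : Prop :=
  ∀ a ν, (∃ i, IsTor L (a i)) → c a ν = 0

/-- The differential `d : C⁰ = M/∂M → C¹`, `(d∫m)(a) = a_{−∂^M} m`. -/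
noncomputable def dZero (R : LCAMod F L M) (m : M) :
    (Fin 1 → A) → (Fin 0 → ℕ) → M :=
  fun a _ => ∑ᶠ n, ((-1 : F)^n) • ((R.D ^ n) (R.act (a 0) m n))

/-- The second term of the differential `d` of the complex of
poly-`λ`-brackets (the double sum over `i < j` in the paper's formula). -/
noncomputable def dPair (L : LCA F A) (R : LCAMod F L M) :
    ∀ {k : ℕ}, ((Fin (k+1) → A) → (Fin k → ℕ) → M) →
      (Fin (k+2) → A) → (Fin (k+1) → ℕ) → M
  | 0, _, _, _ => 0
  | (s+1), c, a, ν =>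
    ∑ i : Fin (s+2), ∑ j : Fin (s+2),
      if i < j then
        ((-1 : F)^(s + i.1 + j.1 + 1)) •
          ∑ p ∈ Finset.range (ν i + 1),
            substDag R.D
              (fun ρ n =>
                if ρ i = 0 ∧ ρ j = 0 then
                  c (Fin.snoc (Fin.snoc (rm2 i.1 j.1 (Fin.init a)) (a (Fin.last (s+2))))
                      (L.br (a i.castSucc) (a j.castSucc) p))
                    (Fin.snoc (rm2 i.1 j.1 ρ) n)
                else 0)
              (Function.update ν i (ν i - p))
      else 0

/-- The differential `d` on the complex `C^•(A,M)` of poly-`λ`-brackets,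
written in terms of coefficients (formula (1.8) of the paper). Here `c` is a
`(k+1)`-`λ`-bracket and `dRaw c` is a `(k+2)`-`λ`-bracket. -/
noncomputable def dRaw (L : LCA F A) (R : LCAMod F L M) {k : ℕ}
    (c : (Fin (k+1) → A) → (Fin k → ℕ) → M) :
    (Fin (k+2) → A) → (Fin (k+1) → ℕ) → M :=
  fun a ν =>
    (∑ i : Fin (k+1), ((-1 : F)^i.1) •
        R.act (a i.castSucc) (c (rm1 i.1 a) (rm1 i.1 ν)) (ν i))
    + dPair L R c a ν
    + ((-1 : F)^(k+1)) • substDag R.D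
        (fun ρ n =>
          if ρ (Fin.last k) = 0 then
            R.act (a (Fin.last (k+1))) (c (Fin.init a) (Fin.init ρ)) n
          else 0) ν
    + ∑ i : Fin (k+1), ((-1 : F)^(i.1+1)) •
        c (Fin.snoc (rm1 i.1 (Fin.init a)) (L.br (a i.castSucc) (a (Fin.last (k+1))) (ν i)))
          (rm1 i.1 ν)

/-- The second term of the differential `δ` of the basic complex
`Γ̃^•(A,M)` (the double sum over `i < j`). -/
noncomputable def deltaPair (L : LCA F A) (R : LCAMod F L M) :
    ∀ {k : ℕ}, ((Fin k → A) → (Fin k → ℕ) → M) →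
      (Fin (k+1) → A) → (Fin (k+1) → ℕ) → M
  | 0, _, _, _ => 0
  | (s+1), γ, a, ν =>
    ∑ i : Fin (s+2), ∑ j : Fin (s+2),
      if i < j then
        ((-1 : F)^(s + i.1 + j.1)) •
          ∑ p ∈ Finset.range (ν i + 1),
            ((((ν i - p) + ν j).choose (ν i - p) : F)) •
              γ (Fin.snoc (rm2 i.1 j.1 a) (L.br (a i) (a j) p))
                (Fin.snoc (rm2 i.1 j.1 ν) ((ν i - p) + ν j))
      else 0

/-- The differential `δ` of the basic Lie conformal algebra cohomology complex
`Γ̃^•(A,M)`, written in terms of coefficients of the `λ`-expansions. -/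
noncomputable def deltaRaw (L : LCA F A) (R : LCAMod F L M) {k : ℕ}
    (γ : (Fin k → A) → (Fin k → ℕ) → M) :
    (Fin (k+1) → A) → (Fin (k+1) → ℕ) → M :=
  fun a ν =>
    (∑ i : Fin (k+1), ((-1 : F)^i.1) •
        R.act (a i) (γ (rm1 i.1 a) (rm1 i.1 ν)) (ν i))
    + deltaPair L R γ a ν

/-- The map `ψ^{k+1} : Γ̃^{k+1}(A,M) → C^{k+1}(A,M)`,
`{a₁ λ₁ ⋯ a_k λ_k a_{k+1}}_{ψ(γ)} = γ_{λ₁,…,λ_k,λ†}(a₁,…,a_{k+1})`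
where `λ† = −λ₁ − ⋯ − λ_k − ∂^M` (with `∂^M` moved to the left). -/
noncomputable def psiRaw (R : LCAMod F L M) {k : ℕ}
    (γ : (Fin (k+1) → A) → (Fin (k+1) → ℕ) → M) :
    (Fin (k+1) → A) → (Fin k → ℕ) → M :=
  fun a ν => substDag R.D (fun ρ n => γ a (Fin.snoc ρ n)) ν

/-- The map `χ` on "polynomial duals": given
`φ : Hom(F[λ₁,…,λ_K], M)` (recorded through its values `φ ν` on monomials),
`chiMap DM φ` is `φ ∘ (substitution λ_{K+1} ↦ −λ₁ − ⋯ − λ_K + ∂^M)`,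
with `∂^M` moved to the left. -/
noncomputable def chiMap {K : ℕ} (DM : M →ₗ[F] M) (φ : (Fin K → ℕ) → M) :
    (Fin (K+1) → ℕ) → M :=
  fun ν =>
    ∑ m ∈ Finset.Iic (fun _ : Fin K => ν (Fin.last K)),
      if wt m ≤ ν (Fin.last K) then
        (((-1 : F)^(wt m)) * (mnom m (ν (Fin.last K) - wt m) : F)) •
          ((DM ^ (ν (Fin.last K) - wt m)) (φ (fun r => Fin.init ν r + m r)))
      else 0

section Product

variable (F) {N : Type*} [CommRing N] [Algebra F N]

/-- The exterior multiplication of basic cochains, in coefficient form. -/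
noncomputable def wedge {h k : ℕ}
    (α : (Fin h → A) → (Fin h → ℕ) → N) (β : (Fin k → A) → (Fin k → ℕ) → N) :
    (Fin (h+k) → A) → (Fin (h+k) → ℕ) → N :=
  fun a ν =>
    ((h.factorial * k.factorial : F))⁻¹ •
      ∑ σ : Equiv.Perm (Fin (h+k)),
        ((Equiv.Perm.sign σ : ℤˣ) : ℤ) •
          (α (fun i => a (σ (Fin.castAdd k i))) (fun i => ν (σ (Fin.castAdd k i))) *
           β (fun i => a (σ (Fin.natAdd h i))) (fun i => ν (σ (Fin.natAdd h i))))

/-- Contraction of a basic cochain by (a generator of) a basic `h`-chain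
`b ⊗ φ ∈ A^{⊗h} ⊗ Hom(F[λ₁,…,λ_h], N)`. -/
noncomputable def iotaG {h k : ℕ} (b : Fin h → A) (φ : (Fin h → ℕ) → N)
    (γ : (Fin (h + k) → A) → (Fin (h + k) → ℕ) → N) :
    (Fin k → A) → (Fin k → ℕ) → N :=
  fun a ν => ∑ᶠ ρ : Fin h → ℕ, φ ρ * γ (Fin.append b a) (Fin.append ρ ν)

/-- The action of `∂` on (generators of) the space of basic `h`-chains:
`∂(a ⊗ φ) = a ⊗ ((−λ₁^* − ⋯ − λ_h^* + ∂)φ)`. -/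
def chainD (R : LCAMod F L N) {h : ℕ} (φ : (Fin h → ℕ) → N) : (Fin h → ℕ) → N :=
  fun ρ => R.D (φ ρ) - ∑ i : Fin h, φ (Function.update ρ i (ρ i + 1))

/-- Contraction by a basic 1-chain `a₀ ⊗ m(x)`, where `m(x) = ∑ m_k x^k` is recorded
by its coefficient function `m : ℕ → N` (formula (3.23) of the paper, using the
pairing `⟨x^p, λ^q⟩ = q! δ_{p,q}`). -/
noncomputable def iota1 {k : ℕ} (a₀ : A) (m : ℕ → N)
    (γ : (Fin (k+1) → A) → (Fin (k+1) → ℕ) → N) : (Fin k → A) → (Fin k → ℕ) → N :=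
  fun a ν => ∑ᶠ q : ℕ, (q.factorial : F) • (m q * γ (Fin.cons a₀ a) (Fin.cons q ν))

/-- The Lie derivative `L_ξ = δ ∘ ι_ξ + ι_ξ ∘ δ` along a basic 1-chain. -/
noncomputable def lie1 (R : LCAMod F L N) {k : ℕ} (a₀ : A) (m : ℕ → N)
    (γ : (Fin (k+1) → A) → (Fin (k+1) → ℕ) → N) : (Fin (k+1) → A) → (Fin (k+1) → ℕ) → N :=
  deltaRaw L R (iota1 F a₀ m γ) + iota1 F a₀ m (deltaRaw L R γ)

end Product

end LCC

namespace PsiAux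
open LCC

section ops
variable {F : Type*} [Field F] {M : Type*} [AddCommGroup M] [Module F M]

/-- Multiplication by the variable `λ_i`. -/
def lam (F : Type*) [Field F] {M : Type*} [AddCommGroup M] [Module F M] {K : ℕ} (i : Fin K) :
    Module.End F ((Fin K → ℕ) → M) where
  toFun f ν := if ν i = 0 then 0 else f (Function.update ν i (ν i - 1))
  map_add' f g := by ext ν; by_cases h : ν i = 0 <;> simp [h]
  map_smul' r f := by ext ν; by_cases h : ν i = 0 <;> simp [h]

/-- Coefficientwise action of `∂^M`. -/
def dop (DM : M →ₗ[F] M) (K : ℕ) : Module.End F ((Fin K → ℕ) → M) where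
  toFun f ν := DM (f ν)
  map_add' f g := by ext ν; simp
  map_smul' r f := by ext ν; simp

/-- `∂^M + λ₁ + ⋯ + λ_K`. -/
def eop (DM : M →ₗ[F] M) (K : ℕ) : Module.End F ((Fin K → ℕ) → M) :=
  dop DM K + ∑ i, lam F i

lemma lam_apply {K : ℕ} (i : Fin K) (f : (Fin K → ℕ) → M) (ν) :
    lam F i f ν = if ν i = 0 then 0 else f (Function.update ν i (ν i - 1)) := rfl

lemma dop_apply (DM : M →ₗ[F] M) {K : ℕ} (f : (Fin K → ℕ) → M) (ν) :
    dop DM K f ν = DM (f ν) := rfl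

lemma eop_apply (DM : M →ₗ[F] M) {K : ℕ} (f : (Fin K → ℕ) → M) (ν) :
    eop DM K f ν = DM (f ν) +
      ∑ i, (if ν i = 0 then 0 else f (Function.update ν i (ν i - 1))) := by
  simp [eop, dop_apply, lam_apply]

lemma lam_comm {K : ℕ} (i j : Fin K) (f : (Fin K → ℕ) → M) :
    lam F i (lam F j f) = lam F j (lam F i f) := by
  ext ν
  simp only [lam_apply]
  by_cases hij : i = j
  · subst hij; rfl
  · rw [Function.update_of_ne (Ne.symm hij), Function.update_of_ne hij,
      Function.update_comm hij]
    by_cases h : ν i = 0 <;> by_cases h' : ν j = 0 <;> simp [h, h']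

lemma dop_lam (DM : M →ₗ[F] M) {K : ℕ} (i : Fin K) (f : (Fin K → ℕ) → M) :
    dop DM K (lam F i f) = lam F i (dop DM K f) := by
  ext ν
  simp only [lam_apply, dop_apply]
  split <;> simp

lemma commute_eop_lam (DM : M →ₗ[F] M) {K : ℕ} (i : Fin K) :
    Commute (eop DM K) (lam F i) := by
  ext f ν
  simp only [eop, Module.End.mul_apply, LinearMap.add_apply, LinearMap.sum_apply, map_add,
    map_sum, dop_lam, lam_comm]

lemma commute_eop_dop (DM : M →ₗ[F] M) {K : ℕ} :
    Commute (eop DM K) (dop DM K) := by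
  ext f ν
  simp only [eop, Module.End.mul_apply, LinearMap.add_apply, LinearMap.sum_apply, map_add,
    map_sum, dop_lam]

lemma mnom_spec {K : ℕ} (m : Fin K → ℕ) (s : ℕ) :
    ((∏ r, (m r).factorial) * s.factorial) * mnom m s = (wt m + s).factorial := by
  have h := Nat.multinomial_spec (Finset.univ : Finset (Option (Fin K)))
    (fun o => o.elim s m)
  have hd : ((∏ r, (m r).factorial) * s.factorial) ∣ (wt m + s).factorial := by
    rw [Fintype.prod_option, Fintype.sum_option] at h
    refine Dvd.intro (Nat.multinomial Finset.univ (fun o : Option (Fin K) => o.elim s m)) ?_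
    rw [mul_comm (∏ r, (m r).factorial), wt, add_comm]
    exact h
  exact Nat.mul_div_cancel' hd

lemma wt_update {K : ℕ} (m : Fin K → ℕ) (i : Fin K) (h : m i ≠ 0) :
    wt (Function.update m i (m i - 1)) + 1 = wt m := by
  unfold wt
  rw [Finset.sum_update_of_mem (Finset.mem_univ i), ← Finset.add_sum_erase _ m (Finset.mem_univ i),
    Finset.sdiff_singleton_eq_erase]
  omega

lemma prod_update {K : ℕ} (m : Fin K → ℕ) (i : Fin K) (h : m i ≠ 0) :
    m i * (∏ r, (Function.update m i (m i - 1) r).factorial) = ∏ r, (m r).factorial := by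
  rw [← Finset.mul_prod_erase _ (fun r => (m r).factorial) (Finset.mem_univ i),
    ← Finset.mul_prod_erase _ (fun r => (Function.update m i (m i - 1) r).factorial)
      (Finset.mem_univ i), ← mul_assoc]
  congr 1
  · simp only [Function.update_self]; exact Nat.mul_factorial_pred h
  · refine Finset.prod_congr rfl fun r hr => ?_
    rw [Function.update_of_ne (Finset.ne_of_mem_erase hr)]

/-- Pascal recursion. -/
lemma mnom_pascal {K : ℕ} (m : Fin K → ℕ) (s : ℕ) (hpos : 0 < wt m + s) :
    mnom m s = (if s = 0 then 0 else mnom m (s-1)) +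
      ∑ i, (if m i = 0 then 0 else mnom (Function.update m i (m i - 1)) s) := by
  have hP : 0 < (∏ r, (m r).factorial) * s.factorial := by positivity
  apply Nat.eq_of_mul_eq_mul_left hP
  obtain ⟨n, hn⟩ : ∃ n, wt m + s = n + 1 := ⟨wt m + s - 1, by omega⟩
  rw [mnom_spec, mul_add, Finset.mul_sum, hn]
  have h1 : ((∏ r, (m r).factorial) * s.factorial) * (if s = 0 then 0 else mnom m (s-1))
      = s * n.factorial := by
    split
    · simp [*]
    · rename_i h
      have := mnom_spec m (s-1)
      rw [show wt m + (s-1) = n by omega] at this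
      rw [← this, ← Nat.mul_factorial_pred h]; ring
  have h2 : ∀ i, ((∏ r, (m r).factorial) * s.factorial) *
      (if m i = 0 then 0 else mnom (Function.update m i (m i - 1)) s) = m i * n.factorial := by
    intro i
    split
    · simp [*]
    · rename_i h
      have := mnom_spec (Function.update m i (m i - 1)) s
      have hw := wt_update m i h
      rw [show wt (Function.update m i (m i - 1)) + s = n by omega] at this
      rw [← this, ← prod_update m i h]; ring
  rw [h1, Finset.sum_congr rfl (fun i _ => h2 i), ← Finset.sum_mul, ← add_mul]
  rw [show s + ∑ i, m i = n + 1 by rw [← hn, wt, add_comm]]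
  rfl

/-- The coefficient operators of `(∂ + Σ λ)^n`. -/
def cf (DM : M →ₗ[F] M) {K : ℕ} (n : ℕ) (m : Fin K → ℕ) : Module.End F M :=
  if wt m ≤ n then (mnom m (n - wt m) : F) • DM ^ (n - wt m) else 0

lemma cf_succ (DM : M →ₗ[F] M) {K : ℕ} (n : ℕ) (m : Fin K → ℕ) :
    cf DM (n+1) m = DM * cf DM n m +
      ∑ i, (if m i = 0 then 0 else cf DM n (Function.update m i (m i - 1))) := by
  have hs : ∀ i, (if m i = 0 then 0 else cf DM n (Function.update m i (m i - 1))) =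
      if wt m ≤ n + 1 then ((if m i = 0 then 0 else
        mnom (Function.update m i (m i - 1)) (n + 1 - wt m) : ℕ) : F) • DM ^ (n + 1 - wt m)
      else 0 := by
    intro i
    by_cases h : m i = 0
    · simp [h]
    · have hw := wt_update m i h
      simp only [h, if_false, cf]
      by_cases h2 : wt m ≤ n + 1
      · rw [if_pos h2, if_pos (by omega),
          show n - wt (Function.update m i (m i - 1)) = n + 1 - wt m by omega]
      · rw [if_neg h2, if_neg (by omega)]
  rw [Finset.sum_congr rfl (fun i _ => hs i)]
  by_cases h : wt m ≤ n + 1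
  · simp only [cf, if_pos h]
    rw [← Finset.sum_smul, mnom_pascal m (n + 1 - wt m) (by omega)]
    by_cases h2 : wt m ≤ n
    · rw [if_pos h2, if_neg (by omega), show n + 1 - wt m = n - wt m + 1 by omega]
      rw [Algebra.mul_smul_comm, ← pow_succ', ← add_smul]
      simp
    · rw [if_neg h2, if_pos (by omega)]
      simp
  · simp only [cf, if_neg h, if_neg (show ¬ wt m ≤ n by omega)]
    simp

lemma eop_pow (DM : M →ₗ[F] M) {K : ℕ} (n : ℕ) (f : (Fin K → ℕ) → M) (ν) :
    (eop DM K ^ n) f ν = ∑ ρ ∈ Finset.Iic ν, cf DM n (fun r => ν r - ρ r) (f ρ) := by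
  induction n generalizing ν with
  | zero =>
    rw [Finset.sum_eq_single ν]
    · simp [cf, wt, mnom]
    · intro ρ hρ hne
      rw [Finset.mem_Iic] at hρ
      have : ¬ wt (fun r => ν r - ρ r) ≤ 0 := by
        intro h
        apply hne
        simp only [wt, nonpos_iff_eq_zero, Finset.sum_eq_zero_iff, Finset.mem_univ, true_imp_iff] at h
        funext r
        have h1 : ρ r ≤ ν r := hρ r
        have := h r; omega
      simp [cf, this]
    · simp
  | succ n ih =>
    rw [pow_succ', Module.End.mul_apply, eop_apply, ih, map_sum]
    simp only [cf_succ, LinearMap.add_apply, Finset.sum_add_distrib, LinearMap.sum_apply,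
      Module.End.mul_apply]
    congr 1
    rw [Finset.sum_comm]
    refine Finset.sum_congr rfl fun i _ => ?_
    by_cases h : ν i = 0
    · simp [h]
    · rw [if_neg h, ih]
      have hsub : Finset.Iic (Function.update ν i (ν i - 1)) ⊆ Finset.Iic ν := by
        intro ρ hρ
        rw [Finset.mem_Iic] at *
        refine hρ.trans ?_
        rw [update_le_iff]
        exact ⟨by omega, fun _ _ => le_rfl⟩
      rw [← Finset.sum_subset hsub]
      · refine Finset.sum_congr rfl fun ρ hρ => ?_
        rw [Finset.mem_Iic, le_update_iff] at hρ
        rw [if_neg (by have := hρ.1; omega)]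
        congr 2
        funext r
        by_cases hr : r = i
        · subst hr; simp; omega
        · simp [hr]
      · intro ρ hρ hn
        rw [Finset.mem_Iic] at hρ
        rw [Finset.mem_Iic, le_update_iff] at hn
        rw [if_pos]
        · simp
        · by_contra hc
          exact hn ⟨by omega, fun j _ => hρ j⟩

/-- `T = -(∂ + λ₁ + ⋯ + λ_K)`. -/
def top (DM : M →ₗ[F] M) (K : ℕ) : Module.End F ((Fin K → ℕ) → M) := - eop DM K

lemma top_pow (DM : M →ₗ[F] M) {K : ℕ} (n : ℕ) (f : (Fin K → ℕ) → M) :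
    (top DM K ^ n) f = (-1 : F)^n • (eop DM K ^ n) f := by
  induction n with
  | zero => simp
  | succ n ih =>
    rw [pow_succ', Module.End.mul_apply, ih, pow_succ', pow_succ', Module.End.mul_apply, map_smul,
      top, LinearMap.neg_apply, mul_smul, neg_smul, one_smul, smul_neg]

lemma substDag_eq (DM : M →ₗ[F] M) {K : ℕ} (q : (Fin K → ℕ) → ℕ → M) (N : ℕ)
    (hN : ∀ ρ n, N ≤ n → q ρ n = 0) :
    substDag DM q = ∑ n ∈ Finset.range N, (top DM K ^ n) (fun ρ => q ρ n) := by
  funext ν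
  rw [Finset.sum_apply]
  have h1 : ∀ n, (top DM K ^ n) (fun ρ => q ρ n) ν =
      ∑ ρ ∈ Finset.Iic ν, (-1 : F)^n • cf DM n (fun r => ν r - ρ r) (q ρ n) := by
    intro n
    rw [← Finset.smul_sum, ← eop_pow, top_pow]
    rfl
  rw [Finset.sum_congr rfl (fun n _ => h1 n), Finset.sum_comm]
  unfold substDag
  refine Finset.sum_congr rfl fun ρ _ => ?_
  set w := wt (fun r => ν r - ρ r) with hw
  rw [finsum_eq_sum_of_support_subset (s := Finset.range (N - w))]
  · rw [← Finset.sum_filter_add_sum_filter_not (Finset.range N) (fun n => w ≤ n)]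
    rw [Finset.sum_eq_zero (s := Finset.filter (fun n => ¬ w ≤ n) _), add_zero]
    · refine Finset.sum_bij (fun s _ => w + s) ?_ ?_ ?_ ?_
      · intro s hs; simp at hs ⊢; omega
      · intro a _ b _ h; omega
      · intro b hb; simp at hb; exact ⟨b - w, by simp; omega, by omega⟩
      · intro s hs
        simp [cf, ← hw, mul_smul]
    · intro n hn
      simp at hn
      simp [cf, ← hw, show ¬ w ≤ n by omega]
  · intro s hs
    simp only [Function.mem_support] at hs
    simp only [Finset.coe_range, Set.mem_Iio]
    by_contra hc
    apply hs
    rw [hN _ _ (by omega)]; simp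


/-! ### Slices with respect to the last variable -/

/-- Coefficient of `μ^n`, `μ` the last variable. -/
def slice {k : ℕ} (g : (Fin (k+1) → ℕ) → M) (n : ℕ) : (Fin k → ℕ) → M :=
  fun ρ => g (Fin.snoc ρ n)

/-- Degree bound in the last variable. -/
def Bd {k : ℕ} (g : (Fin (k+1) → ℕ) → M) (N : ℕ) : Prop := ∀ ν, N ≤ ν (Fin.last k) → g ν = 0

/-- Constant extension. -/
def cext {k : ℕ} (f : (Fin k → ℕ) → M) : (Fin (k+1) → ℕ) → M :=
  fun ν => if ν (Fin.last k) = 0 then f (fun i => ν i.castSucc) else 0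

/-- Substitution of the last variable. -/
noncomputable def sub (DM : M →ₗ[F] M) {k : ℕ} (g : (Fin (k+1) → ℕ) → M) : (Fin k → ℕ) → M :=
  substDag DM (fun ρ n => g (Fin.snoc ρ n))

lemma slice_ext {k : ℕ} {g h : (Fin (k+1) → ℕ) → M} (H : ∀ n, slice g n = slice h n) : g = h := by
  funext ν
  have := congrFun (H (ν (Fin.last k))) (Fin.init ν)
  simpa [slice] using this

lemma sub_eq (DM : M →ₗ[F] M) {k : ℕ} (g : (Fin (k+1) → ℕ) → M) {N : ℕ} (h : Bd g N) :
    sub DM g = ∑ n ∈ Finset.range N, (top DM k ^ n) (slice g n) :=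
  substDag_eq DM _ N (fun ρ n hn => h _ (by simpa using hn))

lemma exists_bd {k : ℕ} {g : (Fin (k+1) → ℕ) → M} (h : (Function.support g).Finite) :
    ∃ N, Bd g N := by
  obtain ⟨N, hN⟩ := (h.image (fun ν => ν (Fin.last k))).bddAbove
  refine ⟨N + 1, fun ν hν => ?_⟩
  by_contra hc
  have := hN (Set.mem_image_of_mem _ (Function.mem_support.2 hc))
  change ν (Fin.last k) ≤ N at this
  omega

lemma Bd.mono {k : ℕ} {g : (Fin (k+1) → ℕ) → M} {N N' : ℕ} (h : Bd g N) (hN : N ≤ N') :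
    Bd g N' := fun ν hν => h ν (hN.trans hν)

lemma Bd.slice {k : ℕ} {g : (Fin (k+1) → ℕ) → M} {N n : ℕ} (h : Bd g N) (hN : N ≤ n) :
    slice g n = 0 := funext fun ρ => h _ (by simpa using hN)

lemma slice_lam_castSucc {k : ℕ} (g : (Fin (k+1) → ℕ) → M) (i : Fin k) (n : ℕ) :
    slice (lam F i.castSucc g) n = lam F i (slice g n) := by
  funext ρ
  simp [slice, lam_apply, Fin.snoc_update]

lemma slice_lam_last_zero {k : ℕ} (g : (Fin (k+1) → ℕ) → M) :
    slice (lam F (Fin.last k) g) 0 = 0 := by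
  funext ρ
  simp [slice, lam_apply]

lemma slice_lam_last_succ {k : ℕ} (g : (Fin (k+1) → ℕ) → M) (n : ℕ) :
    slice (lam F (Fin.last k) g) (n+1) = slice g n := by
  funext ρ
  simp [slice, lam_apply, Fin.update_snoc_last]

lemma slice_dop (DM : M →ₗ[F] M) {k : ℕ} (g : (Fin (k+1) → ℕ) → M) (n : ℕ) :
    slice (dop DM (k+1) g) n = dop DM k (slice g n) := rfl

lemma slice_add {k : ℕ} (g h : (Fin (k+1) → ℕ) → M) (n : ℕ) :
    slice (g + h) n = slice g n + slice h n := rfl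

lemma slice_sum {k : ℕ} {ι : Type*} (s : Finset ι) (g : ι → (Fin (k+1) → ℕ) → M) (n : ℕ) :
    slice (∑ i ∈ s, g i) n = ∑ i ∈ s, slice (g i) n := by
  funext ρ; simp [slice]

lemma eop_eq (DM : M →ₗ[F] M) {k : ℕ} (g : (Fin (k+1) → ℕ) → M) :
    eop DM (k+1) g = dop DM (k+1) g + ∑ i : Fin k, lam F i.castSucc g + lam F (Fin.last k) g := by
  simp [eop, Fin.sum_univ_castSucc, add_assoc]

lemma slice_eop (DM : M →ₗ[F] M) {k : ℕ} (g : (Fin (k+1) → ℕ) → M) (n : ℕ) :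
    slice (eop DM (k+1) g) n = eop DM k (slice g n) + slice (lam F (Fin.last k) g) n := by
  rw [eop_eq, slice_add, slice_add, slice_sum, slice_dop]
  simp [slice_lam_castSucc, eop]

lemma slice_cext {k : ℕ} (f : (Fin k → ℕ) → M) (n : ℕ) :
    slice (cext f) n = if n = 0 then f else 0 := by
  funext ρ
  by_cases h : n = 0 <;> simp [slice, cext, h]

/-! ### Finite supports -/

lemma fin_add {K : ℕ} {f g : (Fin K → ℕ) → M} (hf : (Function.support f).Finite)
    (hg : (Function.support g).Finite) : (Function.support (f + g)).Finite :=
  (hf.union hg).subset (Function.support_add f g)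

lemma fin_neg {K : ℕ} {f : (Fin K → ℕ) → M} (hf : (Function.support f).Finite) :
    (Function.support (-f)).Finite := by
  rwa [Function.support_neg]

lemma fin_smul {K : ℕ} {f : (Fin K → ℕ) → M} (r : F) (hf : (Function.support f).Finite) :
    (Function.support (r • f)).Finite :=
  hf.subset (Function.support_const_smul_subset r f)

lemma fin_sum {K : ℕ} {ι : Type*} (s : Finset ι) {f : ι → (Fin K → ℕ) → M}
    (hf : ∀ i, (Function.support (f i)).Finite) : (Function.support (∑ i ∈ s, f i)).Finite := by
  classical
  induction s using Finset.induction_on with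
  | empty => simp
  | insert a s ha ih => rw [Finset.sum_insert ha]; exact fin_add (hf a) ih

lemma fin_lam {K : ℕ} (i : Fin K) {f : (Fin K → ℕ) → M} (hf : (Function.support f).Finite) :
    (Function.support (lam F i f)).Finite := by
  refine (hf.image (fun ν => Function.update ν i (ν i + 1))).subset ?_
  intro ν hν
  simp only [Function.mem_support, lam_apply, ne_eq, ite_eq_left_iff, not_forall] at hν
  obtain ⟨h0, h1⟩ := hν
  refine ⟨Function.update ν i (ν i - 1), h1, ?_⟩
  simp [show ν i - 1 + 1 = ν i by omega]

lemma fin_dop (DM : M →ₗ[F] M) {K : ℕ} {f : (Fin K → ℕ) → M} (hf : (Function.support f).Finite) :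
    (Function.support (dop DM K f)).Finite := by
  refine hf.subset fun ν hν h => hν ?_
  simp [dop_apply, h]

lemma fin_eop (DM : M →ₗ[F] M) {K : ℕ} {f : (Fin K → ℕ) → M} (hf : (Function.support f).Finite) :
    (Function.support (eop DM K f)).Finite := by
  simp only [eop, LinearMap.add_apply, LinearMap.sum_apply]
  exact fin_add (fin_dop DM hf) (fin_sum _ fun i => fin_lam i hf)

lemma fin_top_pow (DM : M →ₗ[F] M) {K : ℕ} (n : ℕ) {f : (Fin K → ℕ) → M}
    (hf : (Function.support f).Finite) : (Function.support ((top DM K ^ n) f)).Finite := by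
  induction n with
  | zero => simpa using hf
  | succ n ih =>
    rw [pow_succ', Module.End.mul_apply, top, LinearMap.neg_apply]
    exact fin_neg (fin_eop DM ih)

lemma fin_slice {k : ℕ} {g : (Fin (k+1) → ℕ) → M} (hg : (Function.support g).Finite) (n : ℕ) :
    (Function.support (slice g n)).Finite := by
  refine (hg.image Fin.init).subset ?_
  intro ρ hρ
  exact ⟨Fin.snoc ρ n, hρ, by simp⟩

lemma fin_of_slice {k : ℕ} {g : (Fin (k+1) → ℕ) → M} {N : ℕ} (hb : Bd g N)
    (hg : ∀ n, (Function.support (slice g n)).Finite) : (Function.support g).Finite := by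
  refine ((Finset.range N).finite_toSet.biUnion
    (fun n _ => (hg n).image (fun ρ => (Fin.snoc ρ n : Fin (k+1) → ℕ)))).subset ?_
  intro ν hν
  simp only [Set.mem_iUnion]
  refine ⟨ν (Fin.last k), ?_, Fin.init ν, ?_, by simp⟩
  · simp only [Finset.coe_range, Set.mem_Iio]
    by_contra hc
    exact hν (hb ν (by omega))
  · simpa [slice] using hν

lemma fin_sub (DM : M →ₗ[F] M) {k : ℕ} {g : (Fin (k+1) → ℕ) → M}
    (hg : (Function.support g).Finite) : (Function.support (sub DM g)).Finite := by
  obtain ⟨N, hN⟩ := exists_bd hg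
  rw [sub_eq DM g hN]
  exact fin_sum _ fun n => fin_top_pow DM n (fin_slice hg n)

/-! ### Properties of the substitution -/

lemma sub_add (DM : M →ₗ[F] M) {k : ℕ} {g h : (Fin (k+1) → ℕ) → M}
    (hg : (Function.support g).Finite) (hh : (Function.support h).Finite) :
    sub DM (g + h) = sub DM g + sub DM h := by
  obtain ⟨N, hN⟩ := exists_bd hg
  obtain ⟨N', hN'⟩ := exists_bd hh
  have h1 := hN.mono (le_max_left N N')
  have h2 := hN'.mono (le_max_right N N')
  rw [sub_eq DM g h1, sub_eq DM h h2, sub_eq DM (g + h) (N := max N N')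
    (fun ν hν => by simp [h1 ν hν, h2 ν hν])]
  simp [slice_add, Finset.sum_add_distrib]

lemma sub_smul (DM : M →ₗ[F] M) {k : ℕ} (r : F) {g : (Fin (k+1) → ℕ) → M}
    (hg : (Function.support g).Finite) :
    sub DM (r • g) = r • sub DM g := by
  obtain ⟨N, h1⟩ := exists_bd hg
  rw [sub_eq DM g h1, sub_eq DM (r • g) (N := N) (fun ν hν => by simp [h1 ν hν]), Finset.smul_sum]
  refine Finset.sum_congr rfl fun n _ => ?_
  rw [← map_smul]; rfl

lemma sub_sum (DM : M →ₗ[F] M) {k : ℕ} {ι : Type*} (s : Finset ι) {g : ι → (Fin (k+1) → ℕ) → M}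
    (hg : ∀ i, (Function.support (g i)).Finite) :
    sub DM (∑ i ∈ s, g i) = ∑ i ∈ s, sub DM (g i) := by
  classical
  induction s using Finset.induction_on with
  | empty => 
    simp only [Finset.sum_empty]
    rw [sub_eq DM 0 (N := 0) (fun _ _ => rfl)]; simp
  | insert a s ha ih =>
    rw [Finset.sum_insert ha, Finset.sum_insert ha, sub_add DM (hg a) (fin_sum s hg), ih]

lemma commute_top_lam (DM : M →ₗ[F] M) {K : ℕ} (i : Fin K) :
    Commute (top DM K) (lam F i) := by
  ext f : 1
  simp only [Module.End.mul_apply, top, LinearMap.neg_apply, map_neg]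
  exact congrArg Neg.neg (LinearMap.congr_fun (commute_eop_lam DM i) f)

lemma commute_top_dop (DM : M →ₗ[F] M) {K : ℕ} :
    Commute (top DM K) (dop DM K) := by
  ext f : 1
  simp only [Module.End.mul_apply, top, LinearMap.neg_apply, map_neg]
  exact congrArg Neg.neg (LinearMap.congr_fun (commute_eop_dop DM) f)

lemma sub_lam_castSucc (DM : M →ₗ[F] M) {k : ℕ} (i : Fin k) {g : (Fin (k+1) → ℕ) → M}
    (hg : (Function.support g).Finite) :
    sub DM (lam F i.castSucc g) = lam F i (sub DM g) := by
  obtain ⟨N, h1⟩ := exists_bd hg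
  rw [sub_eq DM g h1, sub_eq DM (lam F i.castSucc g) (N := N), map_sum]
  · refine Finset.sum_congr rfl fun n _ => ?_
    rw [slice_lam_castSucc]
    exact LinearMap.congr_fun ((commute_top_lam DM i).pow_left n) _
  · intro ν hν
    rw [lam_apply, h1 _ (by rw [Function.update_of_ne (Fin.castSucc_lt_last i).ne']; exact hν)]
    simp

lemma sub_dop (DM : M →ₗ[F] M) {k : ℕ} {g : (Fin (k+1) → ℕ) → M}
    (hg : (Function.support g).Finite) :
    sub DM (dop DM (k+1) g) = dop DM k (sub DM g) := by
  obtain ⟨N, h1⟩ := exists_bd hg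
  rw [sub_eq DM g h1, sub_eq DM (dop DM (k+1) g) (N := N), map_sum]
  · refine Finset.sum_congr rfl fun n _ => ?_
    rw [slice_dop]
    exact LinearMap.congr_fun ((commute_top_dop DM).pow_left n) _
  · intro ν hν
    rw [dop_apply, h1 _ hν, map_zero]

lemma sub_lam_last (DM : M →ₗ[F] M) {k : ℕ} {g : (Fin (k+1) → ℕ) → M}
    (hg : (Function.support g).Finite) :
    sub DM (lam F (Fin.last k) g) = top DM k (sub DM g) := by
  obtain ⟨N, h1⟩ := exists_bd hg
  rw [sub_eq DM g h1, sub_eq DM (lam F (Fin.last k) g) (N := N + 1), map_sum,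
    Finset.sum_range_succ']
  · simp only [slice_lam_last_zero, map_zero, add_zero, slice_lam_last_succ, pow_succ',
      Module.End.mul_apply]
  · intro ν hν
    rw [lam_apply, h1 _ (by rw [Function.update_self]; omega)]
    simp

lemma sub_eop (DM : M →ₗ[F] M) {k : ℕ} {g : (Fin (k+1) → ℕ) → M}
    (hg : (Function.support g).Finite) :
    sub DM (eop DM (k+1) g) = 0 := by
  rw [eop_eq, sub_add DM (fin_add (fin_dop DM hg) (fin_sum _ fun i => fin_lam _ hg))
    (fin_lam _ hg), sub_add DM (fin_dop DM hg) (fin_sum _ fun i => fin_lam _ hg),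
    sub_sum DM _ (fun i => fin_lam _ hg), sub_dop DM hg, sub_lam_last DM hg]
  simp [sub_lam_castSucc DM _ hg, top, eop]

/-- Division with remainder by `μ - T`. -/
lemma exists_div (DM : M →ₗ[F] M) {k : ℕ} {g : (Fin (k+1) → ℕ) → M}
    (hg : (Function.support g).Finite) :
    ∃ θ : (Fin (k+1) → ℕ) → M, (Function.support θ).Finite ∧
      g = eop DM (k+1) θ + cext (sub DM g) := by
  obtain ⟨N, h1⟩ := exists_bd hg
  set θ : (Fin (k+1) → ℕ) → M := fun ν => ∑ n ∈ Finset.range N,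
    if ν (Fin.last k) < n then (top DM k ^ (n - 1 - ν (Fin.last k))) (slice g n) (Fin.init ν) else 0
    with hθ
  have hs : ∀ j, slice θ j = ∑ n ∈ Finset.range N,
      if j < n then (top DM k ^ (n - 1 - j)) (slice g n) else 0 := by
    intro j
    funext ρ
    simp only [slice, hθ, Fin.snoc_last, Fin.init_snoc, Finset.sum_apply]
    refine Finset.sum_congr rfl fun n _ => ?_
    split <;> rfl
  have he : eop DM k = - top DM k := by simp [top]
  have hq : ∀ j, slice g j = ∑ n ∈ Finset.range N, if n = j then slice g n else 0 := by
    intro j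
    rw [Finset.sum_ite_eq' ]
    split
    · rfl
    · rename_i h; exact h1.slice (by simpa using h)
  refine ⟨θ, ?_, ?_⟩
  · refine fin_of_slice (N := N) ?_ ?_
    · intro ν hν
      refine Finset.sum_eq_zero fun n hn => ?_
      rw [Finset.mem_range] at hn
      rw [if_neg (by omega)]
    · intro j
      rw [hs]
      refine fin_sum _ fun n => ?_
      split
      · exact fin_top_pow DM _ (fin_slice hg n)
      · simp
  · refine slice_ext fun j => ?_
    rw [slice_add, slice_eop, slice_cext, he, hs]
    cases j with
    | zero =>
      rw [slice_lam_last_zero, if_pos rfl, sub_eq DM g h1, hq 0, LinearMap.neg_apply, map_sum,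
        add_zero, ← Finset.sum_neg_distrib, ← Finset.sum_add_distrib]
      refine Finset.sum_congr rfl fun n _ => ?_
      cases n with
      | zero => simp
      | succ n => simp [pow_succ']
    | succ j =>
      rw [slice_lam_last_succ, if_neg (by omega), hq (j+1), LinearMap.neg_apply, map_sum,
        add_zero, hs, ← Finset.sum_neg_distrib, ← Finset.sum_add_distrib]
      refine Finset.sum_congr rfl fun n _ => ?_
      rcases lt_trichotomy n (j+1) with h | h | h
      · simp [show ¬ j < n by omega, show ¬ j + 1 < n by omega, show n ≠ j+1 by omega]
      · subst h; simp
      · obtain ⟨m, rfl⟩ : ∃ m, n = j + 2 + m := ⟨n - (j+2), by omega⟩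
        rw [if_neg (by omega), if_pos (by omega), if_pos (by omega),
          show j + 2 + m - 1 - (j+1) = m by omega, show j + 2 + m - 1 - j = m + 1 by omega,
          pow_succ']
        simp

lemma eop_inj (DM : M →ₗ[F] M) {k : ℕ} {g : (Fin (k+1) → ℕ) → M}
    (hg : (Function.support g).Finite) (h : eop DM (k+1) g = 0) : g = 0 := by
  obtain ⟨N, h1⟩ := exists_bd hg
  have key : ∀ j, slice g (N - j) = 0 := by
    intro j
    induction j with
    | zero => exact h1.slice (by omega)
    | succ j ih =>
      by_cases hj : j < N
      · have := slice_eop DM g (N - j)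
        rw [h, ih, show N - j = (N - (j+1)) + 1 by omega, slice_lam_last_succ, map_zero,
          zero_add] at this
        rw [← this]; rfl
      · rw [show N - (j+1) = N - j by omega]; exact ih
  refine slice_ext fun n => ?_
  by_cases hn : n ≤ N
  · rw [show n = N - (N - n) by omega, key]; rfl
  · rw [h1.slice (by omega)]; rfl

/-! ### Permutations -/

/-- Permutation of the variables. -/
def perm {K : ℕ} (σ : Equiv.Perm (Fin K)) (g : (Fin K → ℕ) → M) : (Fin K → ℕ) → M :=
  fun ν => g (ν ∘ σ)

lemma fin_perm {K : ℕ} (σ : Equiv.Perm (Fin K)) {g : (Fin K → ℕ) → M}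
    (hg : (Function.support g).Finite) : (Function.support (perm σ g)).Finite := by
  refine (hg.image (fun ν => ν ∘ σ.symm)).subset fun ν hν => ⟨ν ∘ σ, hν, ?_⟩
  funext i; simp

lemma perm_add {K : ℕ} (σ : Equiv.Perm (Fin K)) (g h : (Fin K → ℕ) → M) :
    perm σ (g + h) = perm σ g + perm σ h := rfl

lemma perm_eop (DM : M →ₗ[F] M) {K : ℕ} (σ : Equiv.Perm (Fin K)) (g : (Fin K → ℕ) → M) :
    perm σ (eop DM K g) = eop DM K (perm σ g) := by
  funext ν
  simp only [perm, eop_apply]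
  congr 1
  refine Fintype.sum_equiv σ _ _ fun i => ?_
  simp only [Function.comp_apply]
  congr 2
  funext j
  by_cases h : j = i
  · subst h; simp
  · simp [h]

lemma sub_perm (DM : M →ₗ[F] M) {k : ℕ} (σ : Equiv.Perm (Fin (k+1))) {g : (Fin (k+1) → ℕ) → M}
    (hg : (Function.support g).Finite) :
    sub DM (perm σ g) = sub DM (perm σ (cext (sub DM g))) := by
  obtain ⟨θ, hθ, h⟩ := exists_div DM hg
  have hc : (Function.support (cext (sub DM g))).Finite := by
    refine fin_of_slice (N := 1) (fun ν hν => ?_) (fun n => ?_)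
    · exact if_neg (by omega)
    · rw [slice_cext]
      split
      · exact fin_sub DM hg
      · simp
  conv_lhs => rw [h]
  rw [perm_add, perm_eop, sub_add DM (fin_eop DM (fin_perm σ hθ)) (fin_perm σ hc),
    sub_eop DM (fin_perm σ hθ), zero_add]

/-! ### Torsion -/

lemma lam_pow {K : ℕ} (i : Fin K) (j : ℕ) (f : (Fin K → ℕ) → M) (ν) :
    (lam F i ^ j) f ν = if j ≤ ν i then f (Function.update ν i (ν i - j)) else 0 := by
  induction j generalizing ν with
  | zero => simp
  | succ j ih =>
    rw [pow_succ', Module.End.mul_apply, lam_apply]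
    by_cases h : ν i = 0
    · simp [h]
    · rw [if_neg h, ih]
      simp only [Function.update_self, Function.update_idem]
      rw [show ν i - 1 - j = ν i - (j+1) by omega]
      by_cases h2 : j + 1 ≤ ν i
      · rw [if_pos h2, if_pos (by omega)]
      · rw [if_neg h2, if_neg (by omega)]

lemma lam_torsion {K : ℕ} (i : Fin K) (p : Polynomial F) (hp : p ≠ 0) {f : (Fin K → ℕ) → M}
    (hf : (Function.support f).Finite) (h : Polynomial.aeval (lam F i) p f = 0) : f = 0 := by
  by_contra hne
  have hn : (Function.support f).Nonempty := Function.support_nonempty_iff.2 hne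
  obtain ⟨ν, hν, hmax⟩ := hf.exists_maximalFor (fun ν => ν i) _ hn
  have h2 := congrFun h (Function.update ν i (ν i + p.natDegree))
  rw [Polynomial.aeval_eq_sum_range, LinearMap.sum_apply, Finset.sum_apply,
    Finset.sum_eq_single p.natDegree] at h2
  · simp only [LinearMap.smul_apply, Pi.smul_apply, lam_pow, Function.update_self,
      Function.update_idem] at h2
    rw [if_pos (by omega), Nat.add_sub_cancel, Function.update_eq_self] at h2
    simp only [Pi.zero_apply, smul_eq_zero] at h2
    rcases h2 with h2 | h2
    · exact hp (Polynomial.leadingCoeff_eq_zero.1 h2)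
    · exact hν h2
  · intro j hj hjn
    rw [Finset.mem_range] at hj
    simp only [LinearMap.smul_apply, Pi.smul_apply, lam_pow, Function.update_self,
      Function.update_idem]
    rw [if_pos (by omega)]
    by_cases hz : f (Function.update ν i (ν i + p.natDegree - j)) = 0
    · rw [hz, smul_zero]
    · have := hmax hz (by simp; omega)
      simp at this
      omega
  · intro hc; simp at hc

end ops

section main
variable {F : Type*} [Field F] {A M : Type*} [AddCommGroup A] [Module F A] [AddCommGroup M]
  [Module F M] {L : LCA F A} {R : LCAMod F L M}

lemma psiRaw_eq {k : ℕ} (γ : (Fin (k+1) → A) → (Fin (k+1) → ℕ) → M) (a) :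
    psiRaw R γ a = sub R.D (γ a) := rfl

lemma GammaD_eq {k : ℕ} (γ : (Fin k → A) → (Fin k → ℕ) → M) (a) :
    GammaD R γ a = eop R.D k (γ a) := by
  funext ν
  rw [eop_apply]; rfl

lemma gamma_sesq {k : ℕ} {γ : (Fin k → A) → (Fin k → ℕ) → M} (h : IsGamma R k γ)
    (a : Fin k → A) (i : Fin k) (x : A) :
    γ (Function.update a i (L.D x)) = - lam F i (γ (Function.update a i x)) := by
  funext ν
  rw [h.sesq, Pi.neg_apply, lam_apply]
  split <;> simp

lemma gamma_skew {k : ℕ} {γ : (Fin k → A) → (Fin k → ℕ) → M} (h : IsGamma R k γ)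
    (a : Fin k → A) (σ : Equiv.Perm (Fin k)) :
    perm σ (γ (a ∘ σ)) = ((Equiv.Perm.sign σ : ℤˣ) : ℤ) • γ a := by
  funext ν
  exact h.skew a ν σ

lemma gamma_skew' {k : ℕ} {γ : (Fin k → A) → (Fin k → ℕ) → M} (h : IsGamma R k γ)
    (a : Fin k → A) (σ : Equiv.Perm (Fin k)) :
    γ a = ((Equiv.Perm.sign σ : ℤˣ) : ℤ) • perm σ (γ (a ∘ σ)) := by
  rw [gamma_skew h, smul_smul, ← Units.val_mul, Int.units_mul_self]
  simp

lemma gamma_poly {k : ℕ} {γ : (Fin k → A) → (Fin k → ℕ) → M} (h : IsGamma R k γ)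
    (a : Fin k → A) (i : Fin k) (x : A) (p : Polynomial F) :
    γ (Function.update a i (Polynomial.aeval L.D p x)) =
      Polynomial.aeval (lam F i) (p.comp (-Polynomial.X)) (γ (Function.update a i x)) := by
  induction p using Polynomial.induction_on' with
  | add p q hp hq =>
    simp only [map_add, LinearMap.add_apply, h.map_add, hp, hq, Polynomial.add_comp]
  | monomial n r =>
    induction n generalizing r with
    | zero => simp [h.map_smul]
    | succ n ih =>
      have e1 : Polynomial.aeval L.D (Polynomial.monomial (n+1) r) x =
          L.D (Polynomial.aeval L.D (Polynomial.monomial n r) x) := by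
        simp only [Polynomial.aeval_monomial, pow_succ', Module.End.mul_apply,
          Module.algebraMap_end_apply, map_smul]
      rw [e1, gamma_sesq h, ih]
      rw [show (Polynomial.monomial (n+1) r).comp (-Polynomial.X) =
        -(Polynomial.X * (Polynomial.monomial n r).comp (-Polynomial.X)) by
          simp [Polynomial.monomial_comp, pow_succ]; ring]
      rw [map_neg, map_mul, Polynomial.aeval_X]
      rfl

lemma gamma_torsion {k : ℕ} {γ : (Fin k → A) → (Fin k → ℕ) → M} (h : IsGamma R k γ)
    (a : Fin k → A) (i : Fin k) (ht : IsTor L (a i)) : γ a = 0 := by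
  obtain ⟨p, hp, hpa⟩ := ht
  have h1 := gamma_poly h a i (a i) p
  rw [hpa, Function.update_eq_self] at h1
  have h0 : γ (Function.update a i 0) = 0 := by
    have := h.map_smul a i 0 0
    simpa using this
  rw [h0] at h1
  refine lam_torsion i (p.comp (-Polynomial.X)) ?_ (h.fin a) h1.symm
  intro hc
  apply hp
  have := congrArg (fun q => q.comp (-Polynomial.X)) hc
  simpa [Polynomial.comp_assoc] using this

lemma fin_zsmul {K : ℕ} {f : (Fin K → ℕ) → M} (z : ℤ) (hf : (Function.support f).Finite) :
    (Function.support (z • f)).Finite :=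
  hf.subset (Function.support_const_smul_subset z f)

lemma sub_zsmul (DM : M →ₗ[F] M) {k : ℕ} (z : ℤ) {g : (Fin (k+1) → ℕ) → M}
    (hg : (Function.support g).Finite) :
    sub DM (z • g) = z • sub DM g := by
  rw [← Int.cast_smul_eq_zsmul F z g, sub_smul DM _ hg, Int.cast_smul_eq_zsmul]

lemma sub_neg (DM : M →ₗ[F] M) {k : ℕ} {g : (Fin (k+1) → ℕ) → M}
    (hg : (Function.support g).Finite) :
    sub DM (-g) = - sub DM g := by
  have := sub_smul DM (-1 : F) hg
  simpa using this

lemma psi_isCBr {k : ℕ} {γ : (Fin (k+1) → A) → (Fin (k+1) → ℕ) → M} (h : IsGamma R (k+1) γ) :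
    IsCBr R k (psiRaw R γ) where
  map_add a i x y := by
    simp only [psiRaw_eq, h.map_add]
    exact sub_add _ (h.fin _) (h.fin _)
  map_smul a i r x := by
    simp only [psiRaw_eq, h.map_smul]
    exact sub_smul _ _ (h.fin _)
  fin a := fin_sub _ (h.fin _)
  sesq₁ a i x ν := by
    rw [psiRaw_eq, psiRaw_eq, gamma_sesq h, sub_neg _ (fin_lam _ (h.fin _)),
      sub_lam_castSucc _ _ (h.fin _), Pi.neg_apply, lam_apply]
    split <;> simp
  sesq₂ a x ν := by
    rw [psiRaw_eq, psiRaw_eq, gamma_sesq h, sub_neg _ (fin_lam _ (h.fin _)),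
      sub_lam_last _ (h.fin _), top, LinearMap.neg_apply, neg_neg, eop_apply]
  skew a ν σ := by
    have h1 := gamma_skew' h a σ
    have h2 : psiRaw R γ a = ((Equiv.Perm.sign σ : ℤˣ) : ℤ) •
        sub R.D (perm σ (cext (psiRaw R γ (a ∘ σ)))) := by
      rw [psiRaw_eq, psiRaw_eq, ← sub_perm _ _ (h.fin _), ← sub_zsmul _ _ (fin_perm _ (h.fin _)),
        ← h1]
    exact congrFun h2 ν

lemma ker_psi {k : ℕ} {γ : (Fin (k+1) → A) → (Fin (k+1) → ℕ) → M} (h : IsGamma R (k+1) γ)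
    (hz : psiRaw R γ = 0) :
    ∃ θ : (Fin (k+1) → A) → (Fin (k+1) → ℕ) → M, IsGamma R (k+1) θ ∧ γ = GammaD R θ := by
  have hex : ∀ a, ∃ θ : (Fin (k+1) → ℕ) → M, (Function.support θ).Finite ∧
      γ a = eop R.D (k+1) θ := by
    intro a
    obtain ⟨θ, hθ, he⟩ := exists_div R.D (h.fin a)
    refine ⟨θ, hθ, ?_⟩
    have h0 : sub R.D (γ a) = 0 := congrFun hz a
    rw [h0] at he
    rw [he]
    have : cext (0 : (Fin k → ℕ) → M) = 0 := by funext ν; simp [cext]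
    rw [this, add_zero]
  choose θ hf he using hex
  have inj : ∀ f g : (Fin (k+1) → ℕ) → M, (Function.support f).Finite →
      (Function.support g).Finite → eop R.D (k+1) f = eop R.D (k+1) g → f = g := by
    intro f g hf hg hfg
    have := eop_inj R.D (g := f + -g) (fin_add hf (fin_neg hg))
      (by rw [map_add, map_neg, hfg, add_neg_cancel])
    rwa [← sub_eq_add_neg, sub_eq_zero] at this
  refine ⟨θ, ⟨?_, ?_, hf, ?_, ?_⟩, ?_⟩
  · intro a i x y
    refine inj _ _ (hf _) (fin_add (hf _) (hf _)) ?_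
    rw [map_add, ← he, ← he, ← he, h.map_add]
  · intro a i r x
    refine inj _ _ (hf _) (fin_smul r (hf _)) ?_
    rw [map_smul, ← he, ← he, h.map_smul]
  · intro a i x ν
    have h1 : θ (Function.update a i (L.D x)) = - lam F i (θ (Function.update a i x)) := by
      refine inj _ _ (hf _) (fin_neg (fin_lam i (hf _))) ?_
      have hc := LinearMap.congr_fun (commute_eop_lam R.D i) (θ (Function.update a i x))
      simp only [Module.End.mul_apply] at hc
      rw [map_neg, hc, ← he, ← he, gamma_sesq h]
    rw [h1, Pi.neg_apply, lam_apply]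
    split <;> simp
  · intro a ν σ
    have h1 : perm σ (θ (a ∘ σ)) = ((Equiv.Perm.sign σ : ℤˣ) : ℤ) • θ a := by
      refine inj _ _ (fin_perm σ (hf _)) (fin_zsmul _ (hf _)) ?_
      rw [map_zsmul, ← perm_eop, ← he, ← he, gamma_skew h]
    exact congrFun h1 ν
  · funext a
    rw [GammaD_eq, he]

end main
end PsiAux

open LCC in
/-- For every `k ≥ 1` and every basic cochain `γ̃ ∈ Γ̃^k(A,M)`:
(a) `ψ^k(γ̃)` lies in `C̄^k(A,M)` (it is a `k`-`λ`-bracket vanishing on torsion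
elements); (b) the kernel of `ψ^k` is exactly `∂Γ̃^k(A,M)`, so `ψ^k` induces an
injective `F`-linear map `Γ^k = Γ̃^k/∂Γ̃^k ↪ C̄^k ⊆ C^k`.
(Here `k = k₀ + 1` so that `k ≥ 1`.) -/
theorem psi_lands_in_Cbar_and_kernel_is_dGamma
    {F : Type*} [Field F] [CharZero F]
    {A M : Type*} [AddCommGroup A] [Module F A] [AddCommGroup M] [Module F M]
    (L : LCA F A) (R : LCAMod F L M) (k₀ : ℕ)
    (γ : (Fin (k₀+1) → A) → (Fin (k₀+1) → ℕ) → M) (hγ : IsGamma R (k₀+1) γ) :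
    (IsCBr R k₀ (psiRaw R γ) ∧ VanishOnTorsion L (psiRaw R γ)) ∧
    (psiRaw R γ = 0 ↔ ∃ θ : (Fin (k₀+1) → A) → (Fin (k₀+1) → ℕ) → M,
      IsGamma R (k₀+1) θ ∧ γ = GammaD R θ) := by
  refine ⟨⟨PsiAux.psi_isCBr hγ, ?_⟩, PsiAux.ker_psi hγ, ?_⟩
  · rintro a ν ⟨i, hi⟩
    rw [PsiAux.psiRaw_eq, PsiAux.gamma_torsion hγ a i hi,
      PsiAux.sub_eq R.D 0 (N := 0) (fun _ _ => rfl)]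
    simp
  · rintro ⟨θ, hθ, rfl⟩
    funext a
    rw [PsiAux.psiRaw_eq, PsiAux.GammaD_eq, PsiAux.sub_eop R.D (hθ.fin a)]
    rfl
end

section
/- Suppose the Lie conformal algebra A decomposes, as an 𝔽[∂]-module, as A = T ⊕ (𝔽[∂] ⊗ U), where T is the torsion of A and 𝔽[∂] ⊗ U is a complementary free submodule. Then for every k ≥ 1, ψ^k(Γ̃^k(A,M)) = C̄^k(A,M); hence ψ^k induces a bijective 𝔽-linear map Γ^k(A,M) ≅ C̄^k(A,M). -/
namespace LCC
open Function Finset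

section ops
variable {F : Type*} [Field F] {M : Type*} [AddCommGroup M] [Module F M]

/-- Multiplication by the variable `λ_i`, on coefficient families. -/
def Xop (F : Type*) [Field F] {M : Type*} [AddCommGroup M] [Module F M] {n : ℕ} (i : Fin n) :
    Module.End F ((Fin n → ℕ) → M) where
  toFun f ν := if ν i = 0 then 0 else f (update ν i (ν i - 1))
  map_add' f g := by ext ν; by_cases h : ν i = 0 <;> simp [h]
  map_smul' r f := by ext ν; by_cases h : ν i = 0 <;> simp [h]

lemma Xop_apply {n : ℕ} (i : Fin n) (f : (Fin n → ℕ) → M) (ν) :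
    Xop F i f ν = if ν i = 0 then 0 else f (update ν i (ν i - 1)) := rfl

/-- Coefficientwise application of `∂^M`. -/
def Dop {n : ℕ} (DM : M →ₗ[F] M) : Module.End F ((Fin n → ℕ) → M) where
  toFun f ν := DM (f ν)
  map_add' f g := by ext ν; simp
  map_smul' r f := by ext ν; simp

lemma Dop_apply {n : ℕ} (DM : M →ₗ[F] M) (f : (Fin n → ℕ) → M) (ν) :
    Dop DM f ν = DM (f ν) := rfl

/-- `∂^M + λ_1 + ⋯ + λ_n`. -/
def Gop {n : ℕ} (DM : M →ₗ[F] M) : Module.End F ((Fin n → ℕ) → M) :=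
  Dop DM + ∑ i, Xop F i

/-- `-∂^M - λ_1 - ⋯ - λ_n`. -/
def Top {n : ℕ} (DM : M →ₗ[F] M) : Module.End F ((Fin n → ℕ) → M) := - Gop DM

lemma Gop_apply {n : ℕ} (DM : M →ₗ[F] M) (f : (Fin n → ℕ) → M) :
    Gop DM f = Dop DM f + ∑ i, Xop F i f := by
  simp [Gop]

lemma Xop_comm {n : ℕ} (i j : Fin n) (f : (Fin n → ℕ) → M) :
    Xop F i (Xop F j f) = Xop F j (Xop F i f) := by
  by_cases h : i = j
  · rw [h]
  ext ν
  have h' : j ≠ i := fun e => h e.symm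
  simp only [Xop_apply, update_of_ne h, update_of_ne h']
  rw [update_comm h]
  split_ifs <;> rfl

lemma Xop_Dop {n : ℕ} (DM : M →ₗ[F] M) (i : Fin n) (f : (Fin n → ℕ) → M) :
    Xop F i (Dop DM f) = Dop DM (Xop F i f) := by
  ext ν
  simp only [Xop_apply, Dop_apply]
  split_ifs <;> simp

lemma Xop_Gop {n : ℕ} (DM : M →ₗ[F] M) (i : Fin n) (f : (Fin n → ℕ) → M) :
    Xop F i (Gop DM f) = Gop DM (Xop F i f) := by
  simp only [Gop_apply, map_add, map_sum, Xop_Dop]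
  congr 1
  exact Finset.sum_congr rfl fun j _ => Xop_comm _ _ _

lemma Xop_Top {n : ℕ} (DM : M →ₗ[F] M) (i : Fin n) :
    Commute (Xop F i) (Top (n := n) DM) := by
  ext1 f
  simp [Top, Module.End.mul_apply, Xop_Gop]

/-- Permutation of the variables. -/
def Pop (F : Type*) [Field F] {M : Type*} [AddCommGroup M] [Module F M] {n : ℕ}
    (σ : Equiv.Perm (Fin n)) : Module.End F ((Fin n → ℕ) → M) where
  toFun f ν := f (ν ∘ σ)
  map_add' _ _ := rfl
  map_smul' _ _ := rfl

lemma Pop_apply {n : ℕ} (σ : Equiv.Perm (Fin n)) (f : (Fin n → ℕ) → M) (ν) :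
    Pop F σ f ν = f (ν ∘ σ) := rfl

lemma Xop_Pop {n : ℕ} (σ : Equiv.Perm (Fin n)) (i : Fin n) (f : (Fin n → ℕ) → M) :
    Xop F (σ i) (Pop F σ f) = Pop F σ (Xop F i f) := by
  ext ν
  simp only [Xop_apply, Pop_apply, comp_apply]
  have : update ν (σ i) (ν (σ i) - 1) ∘ σ = update (ν ∘ σ) i (ν (σ i) - 1) := by
    ext j
    by_cases h : j = i
    · subst h; simp
    · simp [update_of_ne h, update_of_ne (σ.injective.ne h)]
  rw [this]

lemma Gop_Pop {n : ℕ} (DM : M →ₗ[F] M) (σ : Equiv.Perm (Fin n)) (f : (Fin n → ℕ) → M) :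
    Gop DM (Pop F σ f) = Pop F σ (Gop DM f) := by
  simp only [Gop_apply, map_add, map_sum]
  congr 1
  rw [← Equiv.sum_comp σ]
  exact Finset.sum_congr rfl fun j _ => Xop_Pop _ _ _

lemma Xop_fin {n : ℕ} (i : Fin n) (f : (Fin n → ℕ) → M) (hf : (support f).Finite) :
    (support (Xop F i f)).Finite := by
  refine (hf.image (fun ν => update ν i (ν i + 1))).subset ?_
  intro ν hν
  simp only [mem_support, Xop_apply] at hν
  split_ifs at hν with h
  · exact absurd rfl hν
  · refine ⟨_, hν, ?_⟩
    simp [Nat.sub_add_cancel (Nat.one_le_iff_ne_zero.mpr h)]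

lemma Dop_fin {n : ℕ} (DM : M →ₗ[F] M) (f : (Fin n → ℕ) → M) (hf : (support f).Finite) :
    (support (Dop DM f)).Finite := by
  refine hf.subset ?_
  intro ν hν h
  exact hν (by simp [Dop_apply, h])

lemma sum_fin {ι α : Type*} (s : Finset ι) (f : ι → α → M)
    (hf : ∀ i ∈ s, (support (f i)).Finite) : (support (∑ i ∈ s, f i)).Finite := by
  classical
  induction s using Finset.induction_on with
  | empty => simp
  | insert a s ha ih =>
    rw [Finset.sum_insert ha]
    refine Set.Finite.subset (Set.Finite.union (hf a (by simp)) (ih fun i hi => hf i (by simp [hi])))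
      (support_add _ _)

lemma Gop_fin {n : ℕ} (DM : M →ₗ[F] M) (f : (Fin n → ℕ) → M) (hf : (support f).Finite) :
    (support (Gop DM f)).Finite := by
  rw [Gop_apply]
  exact Set.Finite.subset ((Dop_fin DM f hf).union (sum_fin _ _ fun i _ => Xop_fin i f hf))
    (support_add _ _)

lemma Top_pow_fin {n : ℕ} (DM : M →ₗ[F] M) (j : ℕ) (f : (Fin n → ℕ) → M)
    (hf : (support f).Finite) : (support ((Top DM ^ j) f)).Finite := by
  induction j with
  | zero => simpa using hf
  | succ j ih =>
    rw [pow_succ', Module.End.mul_apply, Top, LinearMap.neg_apply, support_neg]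
    exact Gop_fin DM _ ih

/-- Coefficient of `λ_{K+1}^n`. -/
def slice (F : Type*) [Field F] {M : Type*} [AddCommGroup M] [Module F M] {K : ℕ} (n : ℕ) :
    ((Fin (K+1) → ℕ) → M) →ₗ[F] ((Fin K → ℕ) → M) where
  toFun f ρ := f (Fin.snoc (α := fun _ => ℕ) ρ n)
  map_add' _ _ := rfl
  map_smul' _ _ := rfl

lemma slice_apply {K : ℕ} (n : ℕ) (f : (Fin (K+1) → ℕ) → M) (ρ) :
    slice F n f ρ = f (Fin.snoc (α := fun _ => ℕ) ρ n) := rfl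

lemma slice_ext {K : ℕ} {f g : (Fin (K+1) → ℕ) → M}
    (h : ∀ n, slice F n f = slice F n g) : f = g := by
  ext ν
  have := congrFun (h (ν (Fin.last K))) (Fin.init ν)
  simpa [slice_apply] using this

lemma slice_Xcast {K : ℕ} (n : ℕ) (i : Fin K) (f : (Fin (K+1) → ℕ) → M) :
    slice F n (Xop F i.castSucc f) = Xop F i (slice F n f) := by
  ext ρ
  simp only [slice_apply, Xop_apply, Fin.snoc_castSucc, Fin.snoc_update]

lemma slice_Dop {K : ℕ} (DM : M →ₗ[F] M) (n : ℕ) (f : (Fin (K+1) → ℕ) → M) :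
    slice F n (Dop DM f) = Dop DM (slice F n f) := rfl

lemma slice_Xlast_zero {K : ℕ} (f : (Fin (K+1) → ℕ) → M) :
    slice F 0 (Xop F (Fin.last K) f) = 0 := by
  ext ρ
  simp [slice_apply, Xop_apply]

lemma slice_Xlast_succ {K : ℕ} (n : ℕ) (f : (Fin (K+1) → ℕ) → M) :
    slice F (n+1) (Xop F (Fin.last K) f) = slice F n f := by
  ext ρ
  simp [slice_apply, Xop_apply, Fin.update_snoc_last]

lemma slice_fin {K : ℕ} (n : ℕ) (f : (Fin (K+1) → ℕ) → M) (hf : (support f).Finite) :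
    (support (slice F n f)).Finite := by
  refine (hf.image Fin.init).subset ?_
  intro ρ hρ
  exact ⟨_, hρ, by simp⟩

lemma slice_bound {K : ℕ} (f : (Fin (K+1) → ℕ) → M) (hf : (support f).Finite) :
    ∃ N, ∀ n, N ≤ n → slice F n f = 0 := by
  obtain ⟨B, hB⟩ := (hf.image (fun ν => ν (Fin.last K))).bddAbove
  refine ⟨B + 1, fun n hn => ?_⟩
  ext ρ
  by_contra h
  have := hB ⟨_, h, rfl⟩
  simp at this
  omega

lemma slice_Gop {K : ℕ} (DM : M →ₗ[F] M) (n : ℕ) (f : (Fin (K+1) → ℕ) → M) :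
    slice F n (Gop DM f) = slice F n (Xop F (Fin.last K) f) - Top DM (slice F n f) := by
  simp only [Top, Gop_apply, map_add, map_sum, Fin.sum_univ_castSucc, slice_Xcast, slice_Dop,
    LinearMap.neg_apply]
  abel

lemma Gop_inj {K : ℕ} (DM : M →ₗ[F] M) (f : (Fin (K+1) → ℕ) → M) (hf : (support f).Finite)
    (h : Gop DM f = 0) : f = 0 := by
  obtain ⟨N, hN⟩ := slice_bound (F := F) f hf
  have key : ∀ d n, N ≤ n + d → slice F n f = 0 := by
    intro d
    induction d with
    | zero => exact hN
    | succ d ih =>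
      intro n hn
      have h1 := ih (n+1) (by omega)
      have h2 := slice_Gop DM (n+1) f
      rw [h, map_zero, h1, map_zero, slice_Xlast_succ, sub_zero] at h2
      exact h2.symm
  apply slice_ext (F := F)
  intro n
  rw [key N n (by omega), map_zero]

lemma Gop_inj' {K : ℕ} (DM : M →ₗ[F] M) {f g : (Fin (K+1) → ℕ) → M} (hf : (support f).Finite)
    (hg : (support g).Finite) (h : Gop DM f = Gop DM g) : f = g := by
  rw [← sub_eq_zero]
  apply Gop_inj DM
  · exact (hf.union hg).subset (support_sub _ _)
  · rw [map_sub, h, sub_self]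

lemma Gop_surj {K : ℕ} (DM : M →ₗ[F] M) (f : (Fin (K+1) → ℕ) → M) (hf : (support f).Finite)
    (N : ℕ) (hN : ∀ n, N ≤ n → slice F n f = 0)
    (h : ∑ n ∈ range N, (Top DM ^ n) (slice F n f) = 0) :
    ∃ η : (Fin (K+1) → ℕ) → M, (support η).Finite ∧ f = Gop DM η := by
  let S : ℕ → (Fin K → ℕ) → M := fun j => ∑ n ∈ Ico (j+1) N, (Top DM ^ (n-1-j)) (slice F n f)
  let η : (Fin (K+1) → ℕ) → M := fun ν => S (ν (Fin.last K)) (Fin.init ν)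
  have hs : ∀ j, slice F j η = S j := by
    intro j; ext ρ; simp [slice_apply, η]
  have hT : ∀ j, Top DM (S j) = ∑ n ∈ Ico (j+1) N, (Top DM ^ (n-j)) (slice F n f) := by
    intro j
    simp only [S, map_sum]
    refine Finset.sum_congr rfl fun n hn => ?_
    rw [← Module.End.mul_apply, ← pow_succ']
    rw [mem_Ico] at hn
    congr 2
    omega
  refine ⟨η, ?_, ?_⟩
  · have hS : ∀ j, (support (S j)).Finite := fun j =>
      sum_fin _ _ fun n _ => Top_pow_fin DM _ _ (slice_fin n f hf)
    refine ((Set.finite_Iio N).biUnion (t := fun j =>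
      (fun ρ => Fin.snoc (α := fun _ => ℕ) ρ j) '' support (S j)) fun j _ => (hS j).image _).subset ?_
    intro ν hν
    simp only [Set.mem_iUnion]
    refine ⟨ν (Fin.last K), ?_, Fin.init ν, hν, by simp⟩
    by_contra hc
    simp only [Set.mem_Iio, not_lt] at hc
    apply hν
    simp only [η, S]
    rw [Finset.Ico_eq_empty (by omega)]
    simp
  · apply slice_ext (F := F)
    intro j
    rw [slice_Gop, hs, hT]
    cases j with
    | zero =>
      rw [slice_Xlast_zero]
      by_cases hN0 : N = 0
      · subst hN0; simp [hN]
      rw [Finset.range_eq_Ico, Finset.sum_eq_sum_Ico_succ_bot (by omega)] at h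
      simp only [pow_zero, Module.End.one_apply] at h
      rw [zero_sub]
      simpa using eq_neg_of_add_eq_zero_left h
    | succ j =>
      rw [slice_Xlast_succ, hs]
      by_cases hj : N ≤ j + 1
      · rw [hN _ hj]
        simp only [S]
        rw [Finset.Ico_eq_empty (by omega), Finset.Ico_eq_empty (by omega)]
        simp
      · simp only [S]
        rw [Finset.sum_eq_sum_Ico_succ_bot (by omega)]
        rw [eq_sub_iff_add_eq]
        congr 1
        · simp
        · refine Finset.sum_congr rfl fun n hn => ?_
          congr 2
          omega

end ops
end LCC
namespace LCC
open Function Finset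

section subst
variable {F : Type*} [Field F] [CharZero F] {M : Type*} [AddCommGroup M] [Module F M]

/-- Multinomial coefficient as an element of `F`, with total degree `n`. -/
noncomputable def Wc (F : Type*) [Field F] {K : ℕ} (m : Fin K → ℕ) (n : ℕ) : F :=
  if wt m ≤ n then (n.factorial : F) / ((∏ r, ((m r).factorial : F)) * ((n - wt m).factorial : F))
  else 0

lemma mnom_cast {K : ℕ} (m : Fin K → ℕ) (s : ℕ) : (mnom m s : F) = Wc F m (wt m + s) := by
  have hd : (∏ r, (m r).factorial) * s.factorial ∣ (wt m + s).factorial :=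
    (Nat.mul_dvd_mul_right (Nat.prod_factorial_dvd_factorial_sum univ m) _).trans
      (Nat.factorial_mul_factorial_dvd_factorial_add _ _)
  have hne : (((∏ r, (m r).factorial) * s.factorial : ℕ) : F) ≠ 0 := by
    rw [Nat.cast_ne_zero]
    exact mul_ne_zero (Finset.prod_ne_zero_iff.mpr fun r _ => Nat.factorial_ne_zero _)
      (Nat.factorial_ne_zero _)
  unfold mnom Wc
  rw [Nat.cast_div hd hne, if_pos (by omega)]
  simp

lemma wt_pred {K : ℕ} (m : Fin K → ℕ) (i : Fin K) (h : m i ≠ 0) :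
    wt (update m i (m i - 1)) + 1 = wt m := by
  unfold wt
  rw [← Finset.add_sum_erase _ _ (mem_univ i), ← Finset.add_sum_erase univ (fun j => m j) (mem_univ i)]
  rw [Finset.sum_congr rfl (g := fun j => m j) (fun j hj => update_of_ne (Finset.ne_of_mem_erase hj) _ _)]
  simp
  omega

lemma prod_pred {K : ℕ} (m : Fin K → ℕ) (i : Fin K) (h : m i ≠ 0) :
    (∏ r, ((m r).factorial : F))
      = (m i : F) * ∏ r, (((update m i (m i - 1)) r).factorial : F) := by
  rw [← Finset.mul_prod_erase _ _ (mem_univ i),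
    ← Finset.mul_prod_erase univ (fun r => (((update m i (m i - 1)) r).factorial : F)) (mem_univ i)]
  rw [Finset.prod_congr rfl (g := fun r => (((update m i (m i - 1)) r).factorial : F))
    (fun j hj => by rw [update_of_ne (Finset.ne_of_mem_erase hj)])]
  rw [← mul_assoc]
  congr 1
  simp only [update_self]
  rw [← Nat.cast_mul, Nat.mul_factorial_pred h]

lemma Wc_pascal {K : ℕ} (m : Fin K → ℕ) (n : ℕ) :
    Wc F m (n+1) = Wc F m n + ∑ i, if m i = 0 then 0 else Wc F (update m i (m i - 1)) n := by
  by_cases hm : wt m ≤ n + 1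
  · have hP : (∏ r, ((m r).factorial : F)) ≠ 0 :=
      Finset.prod_ne_zero_iff.mpr fun r _ => Nat.cast_ne_zero.mpr (Nat.factorial_ne_zero _)
    obtain ⟨s, hs⟩ := Nat.exists_eq_add_of_le hm
    have hsf : (s.factorial : F) ≠ 0 := Nat.cast_ne_zero.mpr (Nat.factorial_ne_zero _)
    set Q : F := (n.factorial : F) / ((∏ r, ((m r).factorial : F)) * (s.factorial : F)) with hQ
    have h1 : Wc F m (n+1) = (n+1 : ℕ) * Q := by
      unfold Wc
      rw [if_pos hm, show n + 1 - wt m = s by omega, Nat.factorial_succ, hQ]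
      push_cast
      ring
    have h2 : Wc F m n = (s : F) * Q := by
      unfold Wc
      cases s with
      | zero => rw [if_neg (by omega)]; simp
      | succ s =>
        rw [if_pos (by omega), show n - wt m = s by omega, hQ, Nat.factorial_succ]
        have : (s.factorial : F) ≠ 0 := Nat.cast_ne_zero.mpr (Nat.factorial_ne_zero _)
        have h3 : ((s + 1 : ℕ) : F) ≠ 0 := Nat.cast_ne_zero.mpr (by omega)
        rw [Nat.cast_mul]
        field_simp
    have h3 : ∀ i, (if m i = 0 then 0 else Wc F (update m i (m i - 1)) n) = (m i : F) * Q := by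
      intro i
      split_ifs with h
      · simp [h]
      · have hw := wt_pred m i h
        have hp := prod_pred (F := F) m i h
        have hmi : (m i : F) ≠ 0 := Nat.cast_ne_zero.mpr h
        unfold Wc
        rw [if_pos (by omega), show n - wt (update m i (m i - 1)) = s by omega, hQ, hp]
        have hp' : (∏ r, (((update m i (m i - 1)) r).factorial : F)) ≠ 0 :=
          Finset.prod_ne_zero_iff.mpr fun r _ => Nat.cast_ne_zero.mpr (Nat.factorial_ne_zero _)
        field_simp
    rw [h1, h2, Finset.sum_congr rfl (fun i _ => h3 i), ← Finset.sum_mul, ← add_mul, hs]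
    congr 1
    unfold wt
    push_cast
    ring
  · have h3 : ∀ i, (if m i = 0 then 0 else Wc F (update m i (m i - 1)) n) = 0 := by
      intro i
      split_ifs with h
      · rfl
      · have hw := wt_pred m i h
        unfold Wc
        rw [if_neg (by omega)]
    rw [Finset.sum_congr rfl (fun i _ => h3 i)]
    unfold Wc
    rw [if_neg (by omega), if_neg (by omega)]
    simp

/-- Auxiliary closed form for `T ^ n`. -/
noncomputable def Hop {K : ℕ} (DM : M →ₗ[F] M) (n : ℕ) (g : (Fin K → ℕ) → M) :
    (Fin K → ℕ) → M := fun ν =>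
  ∑ ρ ∈ Finset.Iic ν, ((-1 : F)^n * Wc F (ν - ρ) n) • (DM ^ (n - wt (ν - ρ))) (g ρ)

lemma Top_Hop {K : ℕ} (DM : M →ₗ[F] M) (n : ℕ) (g : (Fin K → ℕ) → M) :
    Top DM (Hop DM n g) = Hop DM (n+1) g := by
  ext ν
  have hX : ∀ i : Fin K, Xop F i (Hop DM n g) ν = ∑ ρ ∈ Finset.Iic ν,
      ((-1 : F)^n * (if (ν - ρ) i = 0 then 0 else Wc F (update (ν - ρ) i ((ν - ρ) i - 1)) n)) •
        (DM ^ (n + 1 - wt (ν - ρ))) (g ρ) := by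
    intro i
    rw [Xop_apply]
    split_ifs with h
    · symm
      apply Finset.sum_eq_zero
      intro ρ _
      rw [if_pos (by simp [h])]
      simp
    · simp only [Hop]
      symm
      have hsub : Finset.Iic (update ν i (ν i - 1)) ⊆ Finset.Iic ν := by
        intro ρ hρ
        rw [Finset.mem_Iic] at hρ ⊢
        refine hρ.trans ?_
        rw [update_le_iff]
        exact ⟨Nat.sub_le _ _, fun _ _ => le_rfl⟩
      rw [← Finset.sum_subset hsub]
      · refine Finset.sum_congr rfl fun ρ hρ => ?_
        rw [Finset.mem_Iic] at hρ
        have hi : ρ i ≤ ν i - 1 := by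
          have := hρ i
          rwa [update_self] at this
        have hne : (ν - ρ) i ≠ 0 := by
          change ν i - ρ i ≠ 0
          omega
        have he : update ν i (ν i - 1) - ρ = update (ν - ρ) i ((ν - ρ) i - 1) := by
          ext j
          by_cases hj : j = i
          · subst hj; simp; omega
          · simp [update_of_ne hj]
        have hw := wt_pred _ i hne
        rw [if_neg hne, he, show n + 1 - wt (ν - ρ) =
          n - wt (update (ν - ρ) i ((ν - ρ) i - 1)) by omega]
      · intro ρ hρ hρ'
        rw [Finset.mem_Iic] at hρ hρ'
        rw [if_pos]
        · simp
        · by_contra hc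
          apply hρ'
          rw [le_update_iff]
          simp only [Pi.sub_apply] at hc
          exact ⟨by omega, fun j _ => hρ j⟩
  have hD : DM (Hop DM n g ν) = ∑ ρ ∈ Finset.Iic ν,
      ((-1 : F)^n * Wc F (ν - ρ) n) • (DM ^ (n + 1 - wt (ν - ρ))) (g ρ) := by
    simp only [Hop, map_sum, map_smul]
    refine Finset.sum_congr rfl fun ρ _ => ?_
    by_cases hw : wt (ν - ρ) ≤ n
    · rw [← Module.End.mul_apply, ← pow_succ', show n - wt (ν - ρ) + 1 = n + 1 - wt (ν - ρ) by omega]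
    · unfold Wc; rw [if_neg hw]; simp
  simp only [Top, LinearMap.neg_apply, Gop_apply, Pi.neg_apply, Pi.add_apply, Finset.sum_apply,
    Dop_apply, hX, hD]
  rw [Finset.sum_comm, ← Finset.sum_add_distrib, ← Finset.sum_neg_distrib]
  simp only [Hop]
  refine Finset.sum_congr rfl fun ρ _ => ?_
  rw [← Finset.sum_smul, ← add_smul, ← neg_smul, Wc_pascal, ← Finset.mul_sum]
  congr 1
  ring

lemma Hop_zero {K : ℕ} (DM : M →ₗ[F] M) (g : (Fin K → ℕ) → M) : Hop DM 0 g = g := by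
  ext ν
  simp only [Hop]
  rw [Finset.sum_eq_single ν]
  · simp [Wc, wt]
  · intro ρ hρ hne
    rw [Finset.mem_Iic] at hρ
    have : ¬ wt (ν - ρ) ≤ 0 := by
      intro h0
      apply hne
      unfold wt at h0
      simp only [nonpos_iff_eq_zero, Finset.sum_eq_zero_iff, mem_univ, true_imp_iff] at h0
      refine le_antisymm hρ fun j => ?_
      have := h0 j
      change ν j - ρ j = 0 at this
      change ν j ≤ ρ j
      omega
    unfold Wc
    rw [if_neg this]
    simp
  · intro h; simp at h

lemma Top_pow {K : ℕ} (DM : M →ₗ[F] M) (n : ℕ) (g : (Fin K → ℕ) → M) :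
    (Top DM ^ n) g = Hop DM n g := by
  induction n with
  | zero => simp [Hop_zero]
  | succ n ih => rw [pow_succ', Module.End.mul_apply, ih, Top_Hop]

/-- The substitution operator on coefficient families in `K+1` variables. -/
noncomputable def Eop {K : ℕ} (DM : M →ₗ[F] M) (f : (Fin (K+1) → ℕ) → M) : (Fin K → ℕ) → M :=
  fun ν => substDag DM (fun ρ n => f (Fin.snoc (α := fun _ => ℕ) ρ n)) ν

lemma Eop_eq {K : ℕ} (DM : M →ₗ[F] M) (f : (Fin (K+1) → ℕ) → M) (N : ℕ)
    (hN : ∀ n, N ≤ n → slice F n f = 0) :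
    Eop DM f = ∑ n ∈ range N, (Top DM ^ n) (slice F n f) := by
  ext ν
  simp only [Top_pow, Finset.sum_apply, Hop]
  rw [Finset.sum_comm]
  simp only [Eop, substDag]
  refine Finset.sum_congr rfl fun ρ _ => ?_
  change ∑ᶠ s : ℕ, (((-1 : F)^(wt (ν - ρ) + s)) * (mnom (ν - ρ) s : F)) •
      ((DM ^ s) (slice F (wt (ν - ρ) + s) f ρ)) = _
  set w := wt (ν - ρ) with hw
  rw [finsum_eq_sum_of_support_subset (s := range N)]
  · have h0 : ∀ n, n < w → ((-1 : F)^n * Wc F (ν - ρ) n) • (DM ^ (n - w)) (slice F n f ρ) = 0 := by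
      intro n hn
      unfold Wc
      rw [if_neg (by omega)]
      simp
    have h1 : ∀ n, N ≤ n → ((-1 : F)^n * Wc F (ν - ρ) n) • (DM ^ (n - w)) (slice F n f ρ) = 0 := by
      intro n hn
      rw [hN n hn]
      simp
    have hbig : ∑ n ∈ range N, ((-1 : F)^n * Wc F (ν - ρ) n) • (DM ^ (n - w)) (slice F n f ρ)
        = ∑ n ∈ range (w + N),
          ((-1 : F)^n * Wc F (ν - ρ) n) • (DM ^ (n - w)) (slice F n f ρ) := by
      apply Finset.sum_subset
      · intro n hn; rw [mem_range] at *; omega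
      · intro n _ hn; rw [mem_range] at hn; exact h1 n (by omega)
    rw [hbig, Finset.sum_range_add, Finset.sum_eq_zero (s := range w)
      (fun n hn => h0 n (mem_range.mp hn)), zero_add]
    refine Finset.sum_congr rfl fun s _ => ?_
    rw [mnom_cast, Nat.add_sub_cancel_left]
  · intro s hs
    by_contra hc
    simp only [coe_range, Set.mem_Iio, not_lt] at hc
    apply hs
    simp only []
    rw [hN _ (by omega)]
    simp

lemma Eop_add {K : ℕ} (DM : M →ₗ[F] M) {f g : (Fin (K+1) → ℕ) → M} (hf : (support f).Finite)
    (hg : (support g).Finite) : Eop DM (f + g) = Eop DM f + Eop DM g := by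
  obtain ⟨N₁, h₁⟩ := slice_bound (F := F) f hf
  obtain ⟨N₂, h₂⟩ := slice_bound (F := F) g hg
  have h₁' : ∀ n, N₁ + N₂ ≤ n → slice F n f = 0 := fun n hn => h₁ n (by omega)
  have h₂' : ∀ n, N₁ + N₂ ≤ n → slice F n g = 0 := fun n hn => h₂ n (by omega)
  rw [Eop_eq DM f _ h₁', Eop_eq DM g _ h₂', Eop_eq DM (f+g) (N₁+N₂)
    (fun n hn => by rw [map_add, h₁' n hn, h₂' n hn, add_zero]), ← Finset.sum_add_distrib]
  simp

lemma Eop_smul {K : ℕ} (DM : M →ₗ[F] M) (r : F) {f : (Fin (K+1) → ℕ) → M}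
    (hf : (support f).Finite) : Eop DM (r • f) = r • Eop DM f := by
  obtain ⟨N₁, h₁⟩ := slice_bound (F := F) f hf
  rw [Eop_eq DM f _ h₁, Eop_eq DM (r • f) N₁
    (fun n hn => by rw [map_smul, h₁ n hn, smul_zero]), Finset.smul_sum]
  simp

lemma Eop_zero {K : ℕ} (DM : M →ₗ[F] M) : Eop DM (0 : (Fin (K+1) → ℕ) → M) = 0 := by
  rw [Eop_eq DM 0 0 (by simp)]; simp

lemma Eop_neg {K : ℕ} (DM : M →ₗ[F] M) {f : (Fin (K+1) → ℕ) → M}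
    (hf : (support f).Finite) : Eop DM (-f) = - Eop DM f := by
  have := Eop_smul DM (-1 : F) hf
  simpa using this

lemma Eop_sub {K : ℕ} (DM : M →ₗ[F] M) {f g : (Fin (K+1) → ℕ) → M} (hf : (support f).Finite)
    (hg : (support g).Finite) : Eop DM (f - g) = Eop DM f - Eop DM g := by
  rw [sub_eq_add_neg, Eop_add DM hf (by rwa [support_neg]), Eop_neg DM hg, sub_eq_add_neg]

lemma Eop_sum {K : ℕ} {ι : Type*} (DM : M →ₗ[F] M) (s : Finset ι) (f : ι → (Fin (K+1) → ℕ) → M)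
    (hf : ∀ i ∈ s, (support (f i)).Finite) : Eop DM (∑ i ∈ s, f i) = ∑ i ∈ s, Eop DM (f i) := by
  classical
  induction s using Finset.induction_on with
  | empty => simp [Eop_zero]
  | insert a s ha ih =>
    have h1 : ∀ i ∈ s, (support (f i)).Finite := fun i hi => hf i (by simp [hi])
    rw [Finset.sum_insert ha, Finset.sum_insert ha, Eop_add DM (hf a (by simp)) (sum_fin _ _ h1),
      ih h1]

lemma Eop_Xcast {K : ℕ} (DM : M →ₗ[F] M) (i : Fin K) {f : (Fin (K+1) → ℕ) → M}
    (hf : (support f).Finite) : Eop DM (Xop F i.castSucc f) = Xop F i (Eop DM f) := by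
  obtain ⟨N, h⟩ := slice_bound (F := F) f hf
  rw [Eop_eq DM f _ h, Eop_eq DM _ N
    (fun n hn => by rw [slice_Xcast, h n hn, map_zero]), map_sum]
  refine Finset.sum_congr rfl fun n _ => ?_
  rw [slice_Xcast, ← Module.End.mul_apply, ← Module.End.mul_apply,
    ((Xop_Top DM i).pow_right n).eq]

lemma Eop_Xlast {K : ℕ} (DM : M →ₗ[F] M) {f : (Fin (K+1) → ℕ) → M}
    (hf : (support f).Finite) : Eop DM (Xop F (Fin.last K) f) = Top DM (Eop DM f) := by
  obtain ⟨N, h⟩ := slice_bound (F := F) f hf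
  rw [Eop_eq DM f _ h, Eop_eq DM _ (N+1) (fun n hn => by
    obtain ⟨n, rfl⟩ : ∃ m, n = m + 1 := ⟨n - 1, by omega⟩
    rw [slice_Xlast_succ, h n (by omega)]), map_sum, Finset.sum_range_succ', slice_Xlast_zero,
    map_zero, add_zero]
  refine Finset.sum_congr rfl fun n _ => ?_
  rw [slice_Xlast_succ, pow_succ', Module.End.mul_apply]

lemma Eop_Dop {K : ℕ} (DM : M →ₗ[F] M) {f : (Fin (K+1) → ℕ) → M}
    (hf : (support f).Finite) : Eop DM (Dop DM f) = Dop DM (Eop DM f) := by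
  obtain ⟨N, h⟩ := slice_bound (F := F) f hf
  have hc : Commute (Dop DM) (Top (n := K) DM) := by
    ext1 g
    simp [Top, Module.End.mul_apply, Gop_apply, Xop_Dop]
  rw [Eop_eq DM f _ h, Eop_eq DM _ N
    (fun n hn => by rw [slice_Dop, h n hn, map_zero]), map_sum]
  refine Finset.sum_congr rfl fun n _ => ?_
  rw [slice_Dop, ← Module.End.mul_apply, ← Module.End.mul_apply, (hc.pow_right n).eq]

lemma Eop_Gop {K : ℕ} (DM : M →ₗ[F] M) {f : (Fin (K+1) → ℕ) → M}
    (hf : (support f).Finite) : Eop DM (Gop DM f) = 0 := by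
  rw [Gop_apply, Eop_add DM (Dop_fin DM f hf) (sum_fin _ _ fun i _ => Xop_fin i f hf),
    Eop_sum DM _ _ (fun i _ => Xop_fin i f hf), Fin.sum_univ_castSucc, Eop_Xlast DM hf,
    Eop_Dop DM hf, Finset.sum_congr rfl (fun i _ => Eop_Xcast DM i hf)]
  simp only [Top, LinearMap.neg_apply, Gop_apply]
  abel

lemma Eop_ker {K : ℕ} (DM : M →ₗ[F] M) {f : (Fin (K+1) → ℕ) → M}
    (hf : (support f).Finite) (h : Eop DM f = 0) :
    ∃ η : (Fin (K+1) → ℕ) → M, (support η).Finite ∧ f = Gop DM η := by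
  obtain ⟨N, hN⟩ := slice_bound (F := F) f hf
  exact Gop_surj DM f hf N hN (by rw [← Eop_eq DM f N hN, h])

end subst
end LCC
namespace LCC
open Function Finset

section main
variable {F : Type*} [Field F] [CharZero F]
  {A M : Type*} [AddCommGroup A] [Module F A] [AddCommGroup M] [Module F M]
  {L : LCA F A}

lemma psiRaw_eq (R : LCAMod F L M) {k : ℕ} (γ : (Fin (k+1) → A) → (Fin (k+1) → ℕ) → M) (a) :
    psiRaw R γ a = Eop R.D (γ a) := rfl

lemma GammaD_eq (R : LCAMod F L M) {k : ℕ} (γ : (Fin k → A) → (Fin k → ℕ) → M) (a) :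
    GammaD R γ a = Gop R.D (γ a) := by
  ext ν
  simp [GammaD, Gop_apply, Dop_apply, Xop_apply]

lemma IsGamma.sesq' {R : LCAMod F L M} {k : ℕ} {γ : (Fin k → A) → (Fin k → ℕ) → M}
    (h : IsGamma R k γ) (a i x) : γ (update a i (L.D x)) = - Xop F i (γ (update a i x)) := by
  ext ν
  rw [h.sesq, Pi.neg_apply, Xop_apply]
  split_ifs <;> simp

lemma IsGamma.skew' {R : LCAMod F L M} {k : ℕ} {γ : (Fin k → A) → (Fin k → ℕ) → M}
    (h : IsGamma R k γ) (a σ) :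
    Pop F σ (γ (a ∘ σ)) = ((Equiv.Perm.sign σ : ℤˣ) : ℤ) • γ a := by
  ext ν
  exact h.skew a ν σ

theorem ker_psi (R : LCAMod F L M) (k : ℕ) (γ θ : (Fin (k+1) → A) → (Fin (k+1) → ℕ) → M)
    (hγ : IsGamma R (k+1) γ) (hθ : IsGamma R (k+1) θ) :
    psiRaw R γ = psiRaw R θ ↔ ∃ η, IsGamma R (k+1) η ∧ γ - θ = GammaD R η := by
  have hfin : ∀ a, (support (γ a - θ a)).Finite := fun a =>
    ((hγ.fin a).union (hθ.fin a)).subset (support_sub _ _)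
  constructor
  · intro h
    have hex : ∀ a, ∃ η : (Fin (k+1) → ℕ) → M, (support η).Finite ∧ γ a - θ a = Gop R.D η := by
      intro a
      apply Eop_ker R.D (hfin a)
      rw [Eop_sub R.D (hγ.fin a) (hθ.fin a), ← psiRaw_eq, ← psiRaw_eq, h, sub_self]
    choose η hη1 hη2 using hex
    refine ⟨η, ⟨?_, ?_, hη1, ?_, ?_⟩, ?_⟩
    · intro a i x y
      apply Gop_inj' R.D (hη1 _)
      · exact ((hη1 _).union (hη1 _)).subset (support_add _ _)
      · rw [map_add, ← hη2, ← hη2, ← hη2, hγ.map_add, hθ.map_add]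
        abel
    · intro a i r x
      apply Gop_inj' R.D (hη1 _)
      · exact (hη1 _).subset (support_const_smul_subset _ _)
      · rw [map_smul, ← hη2, ← hη2, hγ.map_smul, hθ.map_smul, smul_sub]
    · intro a i x ν
      have : η (update a i (L.D x)) = - Xop F i (η (update a i x)) := by
        apply Gop_inj' R.D (hη1 _)
        · rw [support_neg]; exact Xop_fin i _ (hη1 _)
        · rw [map_neg, ← Xop_Gop, ← hη2, ← hη2, hγ.sesq', hθ.sesq', map_sub]
          abel
      rw [this, Pi.neg_apply, Xop_apply]
      split_ifs <;> simp
    · intro a ν σ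
      have : Pop F σ (η (a ∘ σ)) = ((Equiv.Perm.sign σ : ℤˣ) : ℤ) • η a := by
        apply Gop_inj' R.D
        · refine ((hη1 (a ∘ σ)).image (fun ν => ν ∘ σ.symm)).subset ?_
          intro ν hν
          refine ⟨ν ∘ σ, hν, ?_⟩
          ext j; simp
        · exact (hη1 _).subset (support_const_smul_subset _ _)
        · rw [Gop_Pop, map_zsmul, ← hη2, ← hη2, map_sub, hγ.skew', hθ.skew', smul_sub]
      exact congrFun this ν
    · ext1 a
      rw [GammaD_eq, ← hη2, Pi.sub_apply]
  · rintro ⟨η, hη, h⟩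
    ext1 a
    rw [psiRaw_eq, psiRaw_eq, ← sub_eq_zero, ← Eop_sub R.D (hγ.fin a) (hθ.fin a)]
    have := congrFun h a
    rw [Pi.sub_apply, GammaD_eq] at this
    rw [this, Eop_Gop R.D (hη.fin a)]

/-- Torsion elements form a submodule. -/
def torSub (L : LCA F A) : Submodule F A where
  carrier := {x | IsTor L x}
  zero_mem' := ⟨1, one_ne_zero, by simp⟩
  add_mem' := by
    rintro x y ⟨p, hp, hpx⟩ ⟨q, hq, hqy⟩
    refine ⟨p * q, mul_ne_zero hp hq, ?_⟩
    rw [map_add]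
    nth_rewrite 1 [mul_comm p q]
    rw [map_mul, map_mul, Module.End.mul_apply, Module.End.mul_apply, hpx, hqy]
    simp
  smul_mem' := by
    rintro r x ⟨p, hp, hpx⟩
    exact ⟨p, hp, by rw [map_smul, hpx, smul_zero]⟩

lemma torSub_D (x : A) (hx : x ∈ torSub L) : L.D x ∈ torSub L := by
  obtain ⟨p, hp, hpx⟩ := hx
  refine ⟨p, hp, ?_⟩
  have h : Polynomial.aeval L.D (p * Polynomial.X) x = 0 := by
    rw [mul_comm, map_mul, Module.End.mul_apply, hpx, map_zero]
  rw [map_mul, Polynomial.aeval_X, Module.End.mul_apply] at h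
  exact h

lemma exists_comp (hA : Decomposes L) : ∃ (U : Submodule F A) (comp : ℕ → A →ₗ[F] A),
    (∀ u ∈ U, comp 0 u = u) ∧ (∀ u ∈ U, ∀ n, n ≠ 0 → comp n u = 0) ∧
    (∀ x, IsTor L x → ∀ n, comp n x = 0) ∧ (∀ x, comp 0 (L.D x) = 0) ∧
    (∀ x n, comp (n+1) (L.D x) = comp n x) ∧ (∀ x, {n | comp n x ≠ 0}.Finite) ∧
    (∀ V : Submodule F A, torSub L ≤ V → U ≤ V → (∀ x ∈ V, L.D x ∈ V) → ∀ x, x ∈ V) := by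
  obtain ⟨U, hU⟩ := hA
  let Ψ : (ℕ →₀ U) →ₗ[F] A := Finsupp.lsum ℕ (fun n => (L.D ^ n) ∘ₗ U.subtype)
  have hΨ : ∀ f : ℕ →₀ U, Ψ f = f.sum (fun n u => (L.D ^ n) (u : A)) := by
    intro f; simp only [Ψ, Finsupp.lsum_apply]; rfl
  have hΨD : ∀ f : ℕ →₀ U, L.D (Ψ f) = Ψ (f.mapDomain Nat.succ) := by
    intro f
    induction f using Finsupp.induction_linear with
    | zero => simp
    | add f g hf hg => rw [map_add, map_add, hf, hg, Finsupp.mapDomain_add, map_add]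
    | single n u =>
      rw [Finsupp.mapDomain_single]
      simp [Ψ, pow_succ', Module.End.mul_apply]
  have hex : ∀ x, ∃ f : ℕ →₀ U, x - Ψ f ∈ torSub L := by
    intro x
    obtain ⟨⟨⟨t, ht⟩, f⟩, h⟩ := hU.2 x
    refine ⟨f, ?_⟩
    have : x - Ψ f = t := by rw [hΨ, ← h]; simp
    rw [this]; exact ht
  have huniq : ∀ x (f g : ℕ →₀ U), x - Ψ f ∈ torSub L → x - Ψ g ∈ torSub L → f = g := by
    intro x f g hf hg
    have := @hU.1 (⟨x - Ψ f, hf⟩, f) (⟨x - Ψ g, hg⟩, g) (by simp [← hΨ])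
    exact congrArg Prod.snd this
  choose cf hcf using hex
  have hcf' : ∀ x f, x - Ψ f ∈ torSub L → cf x = f := fun x f h => huniq x _ _ (hcf x) h
  let comp : ℕ → A →ₗ[F] A := fun n =>
    { toFun := fun x => (cf x n : A)
      map_add' := by
        intro x y
        rw [hcf' (x + y) (cf x + cf y)]
        · simp
        · rw [map_add, add_sub_add_comm]
          exact add_mem (hcf x) (hcf y)
      map_smul' := by
        intro r x
        rw [hcf' (r • x) (r • cf x)]
        · simp
        · rw [map_smul, ← smul_sub]
          exact (torSub L).smul_mem r (hcf x) }
  have hc : ∀ n x, comp n x = (cf x n : A) := fun n x => rfl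
  have hu : ∀ u (h : u ∈ U), cf u = Finsupp.single 0 ⟨u, h⟩ := by
    intro u h
    apply hcf'
    simp [Ψ]
  have hD : ∀ x, cf (L.D x) = (cf x).mapDomain Nat.succ := by
    intro x
    apply hcf'
    rw [← hΨD, ← map_sub]
    exact torSub_D _ (hcf x)
  refine ⟨U, comp, ?_, ?_, ?_, ?_, ?_, ?_, ?_⟩
  · intro u h
    rw [hc, hu u h]; simp
  · intro u h n hn
    rw [hc, hu u h, Finsupp.single_eq_of_ne hn]; rfl
  · intro x hx n
    rw [hc, hcf' x 0 (by rw [map_zero, sub_zero]; exact hx)]; rfl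
  · intro x
    rw [hc, hD, Finsupp.mapDomain_of_notMem_range]
    · rfl
    · rintro ⟨n, hn⟩; exact Nat.succ_ne_zero n hn
  · intro x n
    rw [hc, hc, hD]
    exact congrArg Subtype.val (Finsupp.mapDomain_apply Nat.succ_injective (cf x) n)
  · intro x
    refine (cf x).support.finite_toSet.subset ?_
    intro n hn
    simp only [Set.mem_ofPred_eq, hc] at hn
    simp only [Finset.mem_coe, Finsupp.mem_support_iff]
    intro h0; apply hn; rw [h0]; rfl
  · intro V hT hUV hDV x
    have hp : ∀ n u, u ∈ U → (L.D ^ n) u ∈ V := by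
      intro n u h
      induction n with
      | zero => simpa using hUV h
      | succ n ih => rw [pow_succ', Module.End.mul_apply]; exact hDV _ ih
    have h1 : Ψ (cf x) ∈ V := by
      rw [hΨ]
      exact Submodule.sum_mem _ fun n _ => hp n _ (cf x n).2
    have h2 := add_mem (hT (hcf x)) h1
    simpa using h2

/-- Multilinearity of a coefficient family. -/
structure MLin (F : Type*) [Field F] {A M : Type*} [AddCommGroup A] [Module F A]
    [AddCommGroup M] [Module F M] {k l : ℕ} (c : (Fin k → A) → (Fin l → ℕ) → M) : Prop where
  map_add : ∀ (a : Fin k → A) (i : Fin k) (x y : A),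
    c (update a i (x + y)) = c (update a i x) + c (update a i y)
  map_smul : ∀ (a : Fin k → A) (i : Fin k) (r : F) (x : A),
    c (update a i (r • x)) = r • c (update a i x)

lemma MLin.zero {k l : ℕ} {c : (Fin k → A) → (Fin l → ℕ) → M} (h : MLin F c) (a i)
    (hi : a i = 0) : c a = 0 := by
  have := h.map_smul a i (0 : F) 0
  rw [zero_smul, zero_smul, ← hi, update_eq_self] at this
  exact this

/-- A family with the linearity and sesquilinearity of a bracket, vanishing on torsion elements and
on `U`, is zero. -/
lemma eq_zero_of_U (DM : M →ₗ[F] M) {k : ℕ} (c : (Fin (k+1) → A) → (Fin k → ℕ) → M)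
    (hc : MLin F c)
    (h1 : ∀ a (i : Fin k) x, c (update a i.castSucc (L.D x))
      = - Xop F i (c (update a i.castSucc x)))
    (h2 : ∀ a x, c (update a (Fin.last k) (L.D x)) = Gop DM (c (update a (Fin.last k) x)))
    (hT : ∀ a i, IsTor L (a i) → c a = 0)
    (U : Submodule F A)
    (hind : ∀ V : Submodule F A, torSub L ≤ V → U ≤ V → (∀ x ∈ V, L.D x ∈ V) → ∀ x, x ∈ V)
    (hU : ∀ a, (∀ i, a i ∈ U) → c a = 0) (a) : c a = 0 := by
  have key : ∀ (S : Finset (Fin (k+1))) a, (∀ i, i ∉ S → a i ∈ U) → c a = 0 := by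
    intro S
    induction S using Finset.induction_on with
    | empty => intro a ha; exact hU a fun i => ha i (by simp)
    | insert j S hj ih =>
      intro a ha
      let V : Submodule F A :=
        { carrier := {x | c (update a j x) = 0}
          zero_mem' := hc.zero _ j (by simp)
          add_mem' := by
            intro x y hx hy
            simp only [Set.mem_ofPred_eq] at hx hy ⊢
            rw [hc.map_add, hx, hy, add_zero]
          smul_mem' := by
            intro r x hx
            simp only [Set.mem_ofPred_eq] at hx ⊢
            rw [hc.map_smul, hx, smul_zero] }
      have hV := hind V
        (fun x hx => hT _ j (by rw [update_self]; exact hx))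
        (fun x hx => ih _ (by
          intro i hi
          by_cases hij : i = j
          · subst hij; simpa using hx
          · rw [update_of_ne hij]; exact ha i (by simp [hij, hi])))
        (by
          intro x hx
          change c (update a j x) = 0 at hx
          change c (update a j (L.D x)) = 0
          induction j using Fin.lastCases with
          | last => rw [h2, hx, map_zero]
          | cast i => rw [h1, hx, map_zero, neg_zero])
        (a j)
      change c (update a j (a j)) = 0 at hV
      rwa [update_eq_self] at hV
  exact key univ a (by simp)

/-- Sesquilinear extension from generators. -/
def gam0 (comp : ℕ → A →ₗ[F] A) {k : ℕ} (e : (Fin k → A) → (Fin k → ℕ) → M) :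
    (Fin k → A) → (Fin k → ℕ) → M :=
  fun a ν => ∑ n ∈ Finset.Iic ν, (-1 : F) ^ (wt n) • e (fun j => comp (n j) (a j)) (ν - n)

lemma comp_update (comp : ℕ → A →ₗ[F] A) {k : ℕ} (n : Fin k → ℕ) (a : Fin k → A) (i x) :
    (fun j => comp (n j) (update a i x j))
      = update (fun j => comp (n j) (a j)) i (comp (n i) x) := by
  ext j
  by_cases h : j = i
  · subst h; simp
  · simp [update_of_ne h]

lemma gam0_mlin (comp : ℕ → A →ₗ[F] A) {k : ℕ} {e : (Fin k → A) → (Fin k → ℕ) → M}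
    (he : MLin F e) : MLin F (gam0 comp e) := by
  constructor
  · intro a i x y
    ext ν
    simp only [gam0, comp_update, map_add, he.map_add, Pi.add_apply, smul_add,
      Finset.sum_add_distrib]
  · intro a i r x
    ext ν
    simp only [gam0, comp_update, map_smul, he.map_smul, Pi.smul_apply, Finset.smul_sum]
    exact Finset.sum_congr rfl fun n _ => smul_comm _ _ _

lemma gam0_fin (comp : ℕ → A →ₗ[F] A) (hfin : ∀ x, {n | comp n x ≠ 0}.Finite)
    {k : ℕ} {e : (Fin k → A) → (Fin k → ℕ) → M}
    (he : MLin F e) (hef : ∀ a, (support (e a)).Finite) (a) :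
    (support (gam0 comp e a)).Finite := by
  have hS : (Set.pi Set.univ fun j => {n | comp n (a j) ≠ 0}).Finite :=
    Set.Finite.pi fun j => hfin (a j)
  refine (hS.biUnion (t := fun n => (fun μ => n + μ) '' support (e (fun j => comp (n j) (a j))))
    fun n _ => (hef _).image _).subset ?_
  intro ν hν
  obtain ⟨n, hn, hne⟩ := Finset.exists_ne_zero_of_sum_ne_zero hν
  rw [Finset.mem_Iic] at hn
  have hne' : e (fun j => comp (n j) (a j)) (ν - n) ≠ 0 := fun h => hne (by rw [h, smul_zero])
  simp only [Set.mem_iUnion]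
  refine ⟨n, ?_, ν - n, hne', ?_⟩
  · intro j _ hj
    exact hne' (by rw [he.zero _ j hj]; rfl)
  · ext j
    exact Nat.add_sub_cancel' (hn j)

lemma gam0_sesq (comp : ℕ → A →ₗ[F] A) (h0 : ∀ x, comp 0 (L.D x) = 0)
    (hs : ∀ x n, comp (n+1) (L.D x) = comp n x)
    {k : ℕ} {e : (Fin k → A) → (Fin k → ℕ) → M} (he : MLin F e) (a i x) :
    gam0 comp e (update a i (L.D x)) = - Xop F i (gam0 comp e (update a i x)) := by
  ext ν
  rw [Pi.neg_apply, Xop_apply]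
  simp only [gam0, comp_update]
  have hz : ∀ n : Fin k → ℕ, n i = 0 →
      (-1 : F) ^ (wt n) • e (update (fun j => comp (n j) (a j)) i (comp (n i) (L.D x))) (ν - n)
        = 0 := by
    intro n hn
    rw [he.zero _ i (by rw [update_self, hn, h0])]
    simp
  split_ifs with h
  · rw [neg_zero]
    apply Finset.sum_eq_zero
    intro n hn
    rw [Finset.mem_Iic] at hn
    have : n i ≤ ν i := hn i
    exact hz n (by omega)
  · rw [← Finset.sum_neg_distrib]
    symm
    apply Finset.sum_of_injOn (fun n => update n i (n i + 1))
    · intro n _ m _ hnm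
      simp only at hnm
      ext j
      have := congrFun hnm j
      by_cases hj : j = i
      · subst hj; simpa using this
      · simpa [update_of_ne hj] using this
    · intro n hn
      simp only [coe_Iic, Set.mem_Iic] at hn ⊢
      intro j
      have := hn j
      by_cases hj : j = i
      · subst hj
        simp only [update_self] at this ⊢
        change n j ≤ ν j - 1 at this
        change n j + 1 ≤ ν j
        omega
      · simpa [update_of_ne hj] using this
    · intro n hn hn'
      apply hz
      by_contra hc
      apply hn'
      rw [Finset.mem_Iic] at hn
      refine ⟨update n i (n i - 1), ?_, ?_⟩
      · simp only [coe_Iic, Set.mem_Iic]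
        intro j
        have : n j ≤ ν j := hn j
        by_cases hj : j = i
        · subst hj
          simp only [update_self]
          change n j - 1 ≤ ν j - 1
          omega
        · simpa [update_of_ne hj] using this
      · simp [Nat.sub_add_cancel (Nat.one_le_iff_ne_zero.mpr hc)]
    · intro n _
      have hw := wt_pred (update n i (n i + 1)) i (by simp)
      simp only [update_self, Nat.add_sub_cancel, update_idem, update_eq_self] at hw
      have e1 : update (fun j => comp (update n i (n i + 1) j) (a j)) i
          (comp (update n i (n i + 1) i) (L.D x))
          = update (fun j => comp (n j) (a j)) i (comp (n i) x) := by
        ext j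
        by_cases hj : j = i
        · subst hj; simp [hs]
        · simp [update_of_ne hj]
      have e2 : ν - update n i (n i + 1) = update ν i (ν i - 1) - n := by
        ext j
        by_cases hj : j = i
        · subst hj
          simp only [Pi.sub_apply, update_self]
          omega
        · simp [update_of_ne hj]
      rw [e1, e2, ← hw, pow_succ]
      simp

lemma gam0_U (comp : ℕ → A →ₗ[F] A) (U : Submodule F A) (h0 : ∀ u ∈ U, comp 0 u = u)
    (h1 : ∀ u ∈ U, ∀ n, n ≠ 0 → comp n u = 0)
    {k : ℕ} {e : (Fin k → A) → (Fin k → ℕ) → M} (he : MLin F e) (a : Fin k → A)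
    (ha : ∀ i, a i ∈ U) : gam0 comp e a = e a := by
  ext ν
  simp only [gam0]
  rw [Finset.sum_eq_single 0]
  · have : (fun j => comp ((0 : Fin k → ℕ) j) (a j)) = a := by
      ext j; exact h0 _ (ha j)
    rw [this]
    simp [wt]
  · intro n _ hn
    obtain ⟨j, hj⟩ := Function.ne_iff.mp hn
    rw [he.zero _ j (h1 _ (ha j) _ hj)]
    simp
  · intro h
    exact absurd (by rw [Finset.mem_Iic]; intro j; exact Nat.zero_le _) h

/-- Skew-symmetrization. -/
noncomputable def symm0 (F : Type*) [Field F] {A M : Type*} [AddCommGroup M] [Module F M]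
    {k : ℕ} (g : (Fin k → A) → (Fin k → ℕ) → M) : (Fin k → A) → (Fin k → ℕ) → M :=
  fun a => ((k.factorial : F)⁻¹) • ∑ σ : Equiv.Perm (Fin k),
    ((Equiv.Perm.sign σ : ℤˣ) : ℤ) • Pop F σ (g (a ∘ σ))

lemma Pop_fin {k : ℕ} (σ : Equiv.Perm (Fin k)) (f : (Fin k → ℕ) → M) (hf : (support f).Finite) :
    (support (Pop F σ f)).Finite := by
  refine (hf.image (fun ν => ν ∘ σ.symm)).subset ?_
  intro ν hν
  refine ⟨ν ∘ σ, hν, ?_⟩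
  ext j; simp

lemma symm0_isGamma (R : LCAMod F L M) {k : ℕ} {g : (Fin k → A) → (Fin k → ℕ) → M}
    (hg : MLin F g) (hf : ∀ a, (support (g a)).Finite)
    (hs : ∀ a i x, g (update a i (L.D x)) = - Xop F i (g (update a i x))) :
    IsGamma R k (symm0 F g) := by
  refine ⟨?_, ?_, ?_, ?_, ?_⟩
  · intro a i x y
    simp only [symm0, update_comp_equiv, hg.map_add, map_add, smul_add, Finset.sum_add_distrib]
  · intro a i r x
    simp only [symm0, update_comp_equiv, hg.map_smul, map_smul]
    rw [smul_comm r, Finset.smul_sum (r := r)]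
    congr 1
    exact Finset.sum_congr rfl fun σ _ => smul_comm _ _ _
  · intro a
    refine Set.Finite.subset ?_ (support_const_smul_subset _ _)
    exact sum_fin _ _ fun σ _ =>
      (Pop_fin σ _ (hf _)).subset (support_const_smul_subset _ _)
  · intro a i x ν
    have : symm0 F g (update a i (L.D x)) = - Xop F i (symm0 F g (update a i x)) := by
      simp only [symm0, update_comp_equiv, hs, map_smul, map_sum, map_neg, map_zsmul, smul_neg,
        Finset.sum_neg_distrib]
      congr 2
      refine Finset.sum_congr rfl fun σ _ => ?_
      congr 1
      rw [← Xop_Pop, Equiv.apply_symm_apply]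
    rw [this, Pi.neg_apply, Xop_apply]
    split_ifs <;> simp
  · intro a ν τ
    simp only [symm0, Pi.smul_apply, Finset.sum_apply, Pop_apply]
    rw [smul_comm _ ((k.factorial : F)⁻¹)]
    congr 1
    rw [← Equiv.sum_comp (Equiv.mulLeft τ) (fun σ : Equiv.Perm (Fin k) =>
      ((Equiv.Perm.sign σ : ℤˣ) : ℤ) • g (a ∘ σ) (ν ∘ σ)), Finset.smul_sum]
    refine Finset.sum_congr rfl fun σ _ => ?_
    simp only [Equiv.coe_mulLeft, Equiv.Perm.sign_mul, Equiv.Perm.coe_mul]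
    rw [smul_smul, Units.val_mul, ← mul_assoc, Int.units_coe_mul_self, one_mul]
    rfl

/-- Trivial extension of a bracket to one more variable. -/
def ext0 {k : ℕ} (c : (Fin (k+1) → A) → (Fin k → ℕ) → M) :
    (Fin (k+1) → A) → (Fin (k+1) → ℕ) → M :=
  fun a ν => if ν (Fin.last k) = 0 then c a (fun i => ν i.castSucc) else 0

theorem psi_surj (R : LCAMod F L M) (hA : Decomposes L) (k : ℕ)
    (c : (Fin (k+1) → A) → (Fin k → ℕ) → M) (hc : IsCBr R k c) (hT : VanishOnTorsion L c) :
    ∃ γ : (Fin (k+1) → A) → (Fin (k+1) → ℕ) → M, IsGamma R (k+1) γ ∧ psiRaw R γ = c := by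
  obtain ⟨U, comp, hu0, hu1, htor, hD0, hDs, hfin, hind⟩ := exists_comp hA
  have he : MLin F (ext0 c) := by
    constructor
    · intro a i x y
      ext ν
      simp only [ext0, hc.map_add, Pi.add_apply]
      split_ifs <;> simp
    · intro a i r x
      ext ν
      simp only [ext0, hc.map_smul, Pi.smul_apply]
      split_ifs <;> simp
  have hef : ∀ a, (support (ext0 c a)).Finite := by
    intro a
    refine ((hc.fin a).image (fun ρ => Fin.snoc (α := fun _ => ℕ) ρ 0)).subset ?_
    intro ν hν
    simp only [mem_support, ext0] at hν
    split_ifs at hν with h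
    · refine ⟨_, hν, ?_⟩
      simp only
      rw [← h]
      exact Fin.snoc_init_self ν
    · exact absurd rfl hν
  set g := gam0 comp (ext0 c) with hg
  have hgl : MLin F g := gam0_mlin comp he
  have hgf : ∀ a, (support (g a)).Finite := gam0_fin comp hfin he hef
  have hgs : ∀ a i x, g (update a i (L.D x)) = - Xop F i (g (update a i x)) :=
    gam0_sesq comp hD0 hDs he
  have hγ : IsGamma R (k+1) (symm0 F g) := symm0_isGamma R hgl hgf hgs
  refine ⟨symm0 F g, hγ, ?_⟩
  rw [← sub_eq_zero]
  ext1 a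
  have h1 : ∀ a (i : Fin k) x, c (update a i.castSucc (L.D x))
      = - Xop F i (c (update a i.castSucc x)) := by
    intro a i x
    ext ν
    rw [hc.sesq₁, Pi.neg_apply, Xop_apply]
    split_ifs <;> simp
  have h2 : ∀ a x, c (update a (Fin.last k) (L.D x))
      = Gop R.D (c (update a (Fin.last k) x)) := by
    intro a x
    ext ν
    rw [hc.sesq₂, Gop_apply]
    simp [Dop_apply, Xop_apply]
  refine eq_zero_of_U (L := L) R.D (psiRaw R (symm0 F g) - c) ?_ ?_ ?_ ?_ U hind ?_ a
  · constructor
    · intro a i x y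
      simp only [Pi.sub_apply, psiRaw_eq, hγ.map_add, hc.map_add, Eop_add R.D (hγ.fin _) (hγ.fin _)]
      abel
    · intro a i r x
      simp only [Pi.sub_apply, psiRaw_eq, hγ.map_smul, hc.map_smul, Eop_smul R.D r (hγ.fin _),
        smul_sub]
  · intro a i x
    simp only [Pi.sub_apply, psiRaw_eq, hγ.sesq', h1, Eop_neg R.D (Xop_fin _ _ (hγ.fin _)),
      Eop_Xcast R.D i (hγ.fin _), map_sub]
    abel
  · intro a x
    simp only [Pi.sub_apply, psiRaw_eq, hγ.sesq', h2, Eop_neg R.D (Xop_fin _ _ (hγ.fin _)),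
      Eop_Xlast R.D (hγ.fin _), map_sub, Top, LinearMap.neg_apply, neg_neg]
  · intro a i hi
    have hc0 : c a = 0 := by ext ν; exact hT a ν ⟨i, hi⟩
    have hg0 : ∀ b : Fin (k+1) → A, ∀ j, IsTor L (b j) → g b = 0 := by
      intro b j hj
      ext ν
      simp only [hg, gam0]
      apply Finset.sum_eq_zero
      intro n _
      rw [he.zero _ j (htor _ hj _)]
      simp
    have hs0 : symm0 F g a = 0 := by
      simp only [symm0]
      rw [Finset.sum_eq_zero, smul_zero]
      intro σ _
      rw [hg0 (a ∘ σ) (σ.symm i) (by simpa using hi), map_zero, smul_zero]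
    rw [Pi.sub_apply, psiRaw_eq, hs0, hc0, Eop_zero, sub_zero]
  · intro a ha
    rw [Pi.sub_apply, sub_eq_zero, psiRaw_eq]
    have hPf : ∀ σ : Equiv.Perm (Fin (k+1)), (support (Pop F σ (g (a ∘ σ)))).Finite :=
      fun σ => Pop_fin σ _ (hgf _)
    have hz : ∀ σ : Equiv.Perm (Fin (k+1)),
        ((Equiv.Perm.sign σ : ℤˣ) : ℤ) • Pop F σ (g (a ∘ σ))
          = (((Equiv.Perm.sign σ : ℤˣ) : ℤ) : F) • Pop F σ (g (a ∘ σ)) := fun σ =>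
      (Int.cast_smul_eq_zsmul F _ _).symm
    have hterm : ∀ σ : Equiv.Perm (Fin (k+1)),
        Eop R.D ((((Equiv.Perm.sign σ : ℤˣ) : ℤ) : F) • Pop F σ (g (a ∘ σ))) = c a := by
      intro σ
      rw [Eop_smul R.D _ (hPf σ), hg, gam0_U comp U hu0 hu1 he (a ∘ σ) (fun i => ha _)]
      ext ν
      rw [hc.skew a ν σ, Pi.smul_apply, Int.cast_smul_eq_zsmul]
      rfl
    have hsf : ∀ σ ∈ (univ : Finset (Equiv.Perm (Fin (k+1)))),
        (support ((((Equiv.Perm.sign σ : ℤˣ) : ℤ) : F) • Pop F σ (g (a ∘ σ)))).Finite :=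
      fun σ _ => (hPf σ).subset (support_const_smul_subset _ _)
    simp only [symm0]
    rw [Finset.sum_congr rfl (fun σ _ => hz σ), Eop_smul R.D _ (sum_fin _ _ hsf),
      Eop_sum R.D _ _ hsf, Finset.sum_congr rfl (fun σ _ => hterm σ), Finset.sum_const,
      Finset.card_univ, Fintype.card_perm, Fintype.card_fin, ← Nat.cast_smul_eq_nsmul F, smul_smul,
      inv_mul_cancel₀ (Nat.cast_ne_zero.mpr (Nat.factorial_ne_zero _)), one_smul]

end main
end LCC

open LCC in
/-- Suppose the Lie conformal algebra `A` decomposes, as an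
`F[∂]`-module, as `A = T ⊕ (F[∂] ⊗ U)` with `T` the torsion and `F[∂] ⊗ U` a free
complementary submodule.  Then for every `k ≥ 1`, `ψ^k(Γ̃^k(A,M)) = C̄^k(A,M)`:
every `k`-`λ`-bracket vanishing on torsion elements is of the form `ψ^k(γ̃)` for
some basic cochain `γ̃ ∈ Γ̃^k(A,M)`.  Together with `Ker ψ^k = ∂Γ̃^k` this means that
`ψ^k` induces a bijective `F`-linear map `Γ^k(A,M) ≅ C̄^k(A,M)`. -/
theorem psi_onto_Cbar_of_decomposes
    {F : Type*} [Field F] [CharZero F]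
    {A M : Type*} [AddCommGroup A] [Module F A] [AddCommGroup M] [Module F M]
    (L : LCA F A) (R : LCAMod F L M) (hA : Decomposes L) (k₀ : ℕ) :
    (∀ c : (Fin (k₀+1) → A) → (Fin k₀ → ℕ) → M,
      IsCBr R k₀ c → VanishOnTorsion L c →
        ∃ γ : (Fin (k₀+1) → A) → (Fin (k₀+1) → ℕ) → M,
          IsGamma R (k₀+1) γ ∧ psiRaw R γ = c) ∧
    (∀ γ θ : (Fin (k₀+1) → A) → (Fin (k₀+1) → ℕ) → M,
      IsGamma R (k₀+1) γ → IsGamma R (k₀+1) θ →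
        (psiRaw R γ = psiRaw R θ ↔
          ∃ η, IsGamma R (k₀+1) η ∧ γ - θ = GammaD R η)) := by
  exact ⟨fun c hc hT => psi_surj R hA k₀ c hc hT, fun γ θ hγ hθ => ker_psi R k₀ γ θ hγ hθ⟩
end
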